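/- Let Γ be a strongly connected digraphon on a probability space (Ω,μ) with peripheral multiplicity D, let Ω = P₀ ⊔ P₁ ⊔ … ⊔ P_{D−1} be a partition witnessing graphical D-periodicity such that reachability sequences between P_i and P_j are eventually D-periodic with shift j−i, and let v_L and v_R be the real left and right eigenfunctions for the eigenvalue ρ(Γ). Then the decomposition of the digraphon Γ^D into strong components consists of an empty fragmented set and exactly the strong components P₀, P₁, …, P_{D−1}; moreover, for each i, the digraphon (Γ^D) restricted to P_i × P_i (with the normalized measure μ(·∩P_i)/μ(P_i)) is aperiodic, has spectral radius ρ(Γ)^D/μ(P_i), and the restrictions of v_L and v_R to P_i are its left and right eigenfunctions for this eigenvalue. -/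

import Mathlib

open MeasureTheory Filter Set Topology
open scoped ENNReal Real

namespace Digraphon

variable {Ω : Type*} [MeasurableSpace Ω]

/-- `kpowAux μ Γ n` is the `(n+1)`-st kernel power of `Γ`. -/
noncomputable def kpowAux (μ : Measure Ω) (Γ : Ω → Ω → ℝ) : ℕ → Ω → Ω → ℝ
  | 0 => Γ
  | n + 1 => fun x y => ∫ z, Γ x z * kpowAux μ Γ n z y ∂μ

/-- `dpow μ Γ k` is the `k`-th kernel power of `Γ` (intended for `k ≥ 1`). -/
noncomputable def dpow (μ : Measure Ω) (Γ : Ω → Ω → ℝ) (k : ℕ) : Ω → Ω → ℝ :=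
  kpowAux μ Γ (k - 1)

noncomputable def kpowAuxC (μ : Measure Ω) (Γ : Ω → Ω → ℂ) : ℕ → Ω → Ω → ℂ
  | 0 => Γ
  | n + 1 => fun x y => ∫ z, Γ x z * kpowAuxC μ Γ n z y ∂μ

noncomputable def dpowC (μ : Measure Ω) (Γ : Ω → Ω → ℂ) (k : ℕ) : Ω → Ω → ℂ :=
  kpowAuxC μ Γ (k - 1)

/-- The set of points reachable from `x`. -/
def ReachOut (μ : Measure Ω) (Γ : Ω → Ω → ℝ) (x : Ω) : Set Ω :=
  {z | ∃ k : ℕ, 1 ≤ k ∧ 0 < dpow μ Γ k x z}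

/-- The reachability sequence from `x` to `y`. -/
def reachSeq (μ : Measure Ω) (Γ : Ω → Ω → ℝ) (x y : Ω) : Set ℕ :=
  {k : ℕ | 1 ≤ k ∧ 0 < dpow μ Γ k x y}

/-- A digraphon: a measurable kernel with values in `[0,1]`. -/
def IsDigraphon (Γ : Ω → Ω → ℝ) : Prop :=
  Measurable (Function.uncurry Γ) ∧ ∀ x y, Γ x y ∈ Set.Icc (0 : ℝ) 1

/-- `X` is strongly connected in `Γ`. -/
def StronglyConnectedIn (μ : Measure Ω) (Γ : Ω → Ω → ℝ) (X : Set Ω) : Prop :=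
  MeasurableSet X ∧ 0 < μ X ∧
    ∀ A B : Set Ω, MeasurableSet A → MeasurableSet B → A ∪ B = X → Disjoint A B →
      0 < μ A → 0 < μ B → 0 < ∫ x in A, ∫ y in B, Γ x y ∂μ ∂μ

/-- `X` is a strong component in `Γ`. -/
def StrongComponent (μ : Measure Ω) (Γ : Ω → Ω → ℝ) (X : Set Ω) : Prop :=
  StronglyConnectedIn μ Γ X ∧
    ∀ Y : Set Ω, MeasurableSet Y → 0 < μ (X ∩ Y) → 0 < μ (Y \ X) →
      ¬ StronglyConnectedIn μ Γ Y

/-- `X` is fragmented in `Γ`. -/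
def Fragmented (μ : Measure Ω) (Γ : Ω → Ω → ℝ) (X : Set Ω) : Prop :=
  ∀ Y : Set Ω, Y ⊆ X → MeasurableSet Y → ¬ StronglyConnectedIn μ Γ Y

/-- `τ` is an eigenvalue of the integral kernel operator of `Γ` on `L²(Ω;ℂ)`. -/
def IsEigenvalue (μ : Measure Ω) (Γ : Ω → Ω → ℝ) (τ : ℂ) : Prop :=
  ∃ f : Ω → ℂ, MemLp f 2 μ ∧ ¬(f =ᵐ[μ] 0) ∧
    ∀ᵐ x ∂μ, ∫ y, f y * (Γ y x : ℂ) ∂μ = τ * f x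

/-- The spectral radius of `Γ` (`0` if there are no eigenvalues). -/
noncomputable def specRad (μ : Measure Ω) (Γ : Ω → Ω → ℝ) : ℝ :=
  sSup (insert 0 {r : ℝ | ∃ τ : ℂ, IsEigenvalue μ Γ τ ∧ ‖τ‖ = r})

/-- The number of eigenvalues of modulus `specRad μ Γ`. -/
noncomputable def periphMult (μ : Measure Ω) (Γ : Ω → Ω → ℝ) : ℕ :=
  {τ : ℂ | IsEigenvalue μ Γ τ ∧ ‖τ‖ = specRad μ Γ}.ncard

/-- `P : ZMod d → Set Ω` witnesses graphical `d`-periodicity of `Γ`. -/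
def IsPeriodicityWitness (μ : Measure Ω) (Γ : Ω → Ω → ℝ) {d : ℕ} (P : ZMod d → Set Ω) : Prop :=
  (∀ j, MeasurableSet (P j)) ∧ Pairwise (Function.onFun Disjoint P) ∧ (⋃ j, P j) = Set.univ ∧
    ∀ j : ZMod d, (μ.prod μ) {p : Ω × Ω | p.1 ∈ P j ∧ p.2 ∉ P (j + 1) ∧ Γ p.1 p.2 ≠ 0} = 0

/-- `Γ` is graphically `d`-periodic. -/
def GraphPeriodic (μ : Measure Ω) (Γ : Ω → Ω → ℝ) (d : ℕ) : Prop :=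
  ∃ P : ZMod d → Set Ω, IsPeriodicityWitness μ Γ P

/-- `Γ` is aperiodic. -/
def Aperiodic (μ : Measure Ω) (Γ : Ω → Ω → ℝ) : Prop :=
  ∀ d : ℕ, 1 ≤ d → GraphPeriodic μ Γ d → d = 1

/-- `S ⊆ ℕ` is eventually `D`-periodic with shift `s`. -/
def EvPeriodic (D : ℕ) (s : ℤ) (S : Set ℕ) : Prop :=
  (∀ n ∈ S, (D : ℤ) ∣ ((n : ℤ) - s)) ∧
    ∃ k : ℕ, ∀ n : ℕ, k ≤ n → (((D : ℤ) ∣ ((n : ℤ) - s)) ↔ n ∈ S)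

/-- The homomorphism density `t(C_k, Γ)` of the directed `k`-cycle. -/
noncomputable def cycleDensity (μ : Measure Ω) (Γ : Ω → Ω → ℝ) (k : ℕ) : ℝ :=
  ∫ x : Fin k → Ω, ∏ i : Fin k, Γ (x i) (x (finRotate k i)) ∂(Measure.pi fun _ => μ)

/-- `Γ⟦A⟧` : the kernel equal to `Γ` on `A × A` and `0` elsewhere. -/
noncomputable def kerRestrict (Γ : Ω → Ω → ℝ) (A : Set Ω) : Ω → Ω → ℝ :=
  fun x y => (A ×ˢ A).indicator (Function.uncurry Γ) (x, y)

/-- Equality of sets modulo a `μ`-nullset. -/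
def AEEqSet (μ : Measure Ω) (A B : Set Ω) : Prop := μ ((A \ B) ∪ (B \ A)) = 0

/-- The normalized restriction of `μ` to `A`, as a measure on `↥A`. -/
noncomputable def subMeasure (μ : Measure Ω) (A : Set Ω) : Measure ↥A :=
  (μ A)⁻¹ • Measure.comap Subtype.val μ

/-- The restriction of a kernel to `A × A`, as a kernel on `↥A`. -/
def subKernel (Γ : Ω → Ω → ℝ) (A : Set Ω) : ↥A → ↥A → ℝ :=
  fun a b => Γ ↑a ↑b

/-- A finite oriented graph: no pair of antiparallel edges (in particular no loops). -/
structure OrientedGraph where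
  n : ℕ
  E : Finset (Fin n × Fin n)
  no_anti : ∀ e ∈ E, (e.2, e.1) ∉ E

/-- The homomorphism density `t(D, Γ)` of an oriented graph `D`. -/
noncomputable def homDensity (μ : Measure Ω) (Γ : Ω → Ω → ℝ) (D : OrientedGraph) : ℝ :=
  ∫ x : Fin D.n → Ω, ∏ e ∈ D.E, Γ (x e.1) (x e.2) ∂(Measure.pi fun _ => μ)

/-- The cut norm distance of two kernels. -/
noncomputable def cutNormDist (μ : Measure Ω) (U W : Ω → Ω → ℝ) : ℝ :=
  sSup {r : ℝ | ∃ S T : Set Ω, MeasurableSet S ∧ MeasurableSet T ∧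
    r = |∫ x in S, ∫ y in T, (U x y - W x y) ∂μ ∂μ|}

/-- The cut distance of two kernels. -/
noncomputable def cutDist (μ : Measure Ω) (U W : Ω → Ω → ℝ) : ℝ :=
  sInf {r : ℝ | ∃ e : Ω ≃ᵐ Ω, MeasurePreserving e μ μ ∧
    r = cutNormDist μ U (fun x y => W (e x) (e y))}


/-! ### Bounded kernels and their operators -/

/-- Bounded measurable kernels. -/
def BK (K : Ω → Ω → ℝ) : Prop :=
  Measurable (Function.uncurry K) ∧ ∃ C : ℝ, ∀ x y, |K x y| ≤ C

noncomputable def app (μ : Measure Ω) (K : Ω → Ω → ℝ) (f : Ω → ℂ) (x : Ω) : ℂ :=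
  ∫ y, f y * (K y x : ℂ) ∂μ

noncomputable def HS (μ : Measure Ω) (K : Ω → Ω → ℝ) : ℝ≥0∞ :=
  ∫⁻ x, ∫⁻ y, ‖K y x‖ₑ ^ 2 ∂μ ∂μ

lemma BK.meas_left {K : Ω → Ω → ℝ} (hK : BK K) (x : Ω) : Measurable (fun y => K y x) :=
  hK.1.comp (measurable_id.prodMk measurable_const)

lemma BK.meas_right {K : Ω → Ω → ℝ} (hK : BK K) (x : Ω) : Measurable (fun y => K x y) :=
  hK.1.comp (measurable_const.prodMk measurable_id)

lemma BK.transpose {K : Ω → Ω → ℝ} (hK : BK K) : BK (fun x y => K y x) :=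
  ⟨hK.1.comp measurable_swap, hK.2.imp fun _ h x y => h y x⟩

lemma app_congr {μ : Measure Ω} {K : Ω → Ω → ℝ} {f g : Ω → ℂ} (h : f =ᵐ[μ] g) :
    app μ K f = app μ K g := by
  funext x
  apply integral_congr_ae
  filter_upwards [h] with y hy
  rw [hy]

lemma BK.integrable_mul {μ : Measure Ω} {K : Ω → Ω → ℝ} (hK : BK K)
    {f : Ω → ℂ} (hf : Integrable f μ) (x : Ω) : Integrable (fun y => f y * (K y x : ℂ)) μ := by
  obtain ⟨C, hC⟩ := hK.2
  refine hf.mul_bdd (c := C) ?_ ?_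
  · exact (Complex.measurable_ofReal.comp (hK.meas_left x)).aestronglyMeasurable
  · exact ae_of_all _ fun y => by simpa using hC y x

lemma app_aesm {μ : Measure Ω} [SFinite μ] {K : Ω → Ω → ℝ} (hK : BK K)
    {f : Ω → ℂ} (hf : AEStronglyMeasurable f μ) : StronglyMeasurable (app μ K f) := by
  rw [app_congr hf.ae_eq_mk]
  have h1 : StronglyMeasurable (fun p : Ω × Ω => hf.mk f p.2 * (K p.2 p.1 : ℂ)) := by
    refine (hf.stronglyMeasurable_mk.comp_measurable measurable_snd).mul ?_
    exact (Complex.measurable_ofReal.comp (hK.1.comp measurable_swap)).stronglyMeasurable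
  exact h1.integral_prod_right'

lemma eLpNorm_two_sq' {μ : Measure Ω} (f : Ω → ℂ) :
    eLpNorm f 2 μ ^ 2 = ∫⁻ x, ‖f x‖ₑ ^ 2 ∂μ := by
  have := eLpNorm_nnreal_pow_eq_lintegral (μ := μ) (f := f) (p := 2) (by norm_num)
  simpa using this

lemma app_sq_bound {μ : Measure Ω} [SFinite μ] {K : Ω → Ω → ℝ} (hK : BK K)
    {f : Ω → ℂ} (hf : AEStronglyMeasurable f μ) :
    eLpNorm (app μ K f) 2 μ ^ 2 ≤ eLpNorm f 2 μ ^ 2 * HS μ K := by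
  rw [eLpNorm_two_sq', eLpNorm_two_sq', HS, ← lintegral_const_mul]
  · apply lintegral_mono
    intro x
    have h1 : ‖app μ K f x‖ₑ ≤ ∫⁻ y, ‖f y‖ₑ * ‖K y x‖ₑ ∂μ := by
      refine (enorm_integral_le_lintegral_enorm _).trans (le_of_eq ?_)
      refine lintegral_congr fun y => ?_
      rw [enorm_mul]
      congr 1
      simp [enorm, nnnorm]
    have h2 := ENNReal.lintegral_mul_le_Lp_mul_Lq μ (p := 2) (q := 2)
      (Real.holderConjugate_iff.mpr ⟨by norm_num, by norm_num⟩) (f := fun y => ‖f y‖ₑ)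
      (g := fun y => ‖K y x‖ₑ) hf.enorm (hK.meas_left x).enorm.aemeasurable
    have h3 := pow_le_pow_left' (h1.trans h2) 2
    refine h3.trans (le_of_eq ?_)
    rw [mul_pow]
    have h4 : ∀ a : ℝ≥0∞, (a ^ (1 / 2 : ℝ)) ^ 2 = a := by
      intro a
      rw [← ENNReal.rpow_natCast, ← ENNReal.rpow_mul]; norm_num
    rw [h4, h4]
    simp
  · have : Measurable (fun p : Ω × Ω => ‖K p.2 p.1‖ₑ ^ 2) :=
      ((hK.1.comp measurable_swap).enorm).pow_const 2
    exact this.lintegral_prod_right'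

lemma HS_le {μ : Measure Ω} [IsProbabilityMeasure μ] {K : Ω → Ω → ℝ} {C : ℝ}
    (h : ∀ x y, |K x y| ≤ C) : HS μ K ≤ ENNReal.ofReal C ^ 2 := by
  have : HS μ K ≤ ∫⁻ x, ∫⁻ y, ENNReal.ofReal C ^ 2 ∂μ ∂μ := by
    refine lintegral_mono fun x => lintegral_mono fun y => ?_
    refine pow_le_pow_left' ?_ 2
    rw [← ofReal_norm]
    exact ENNReal.ofReal_le_ofReal (h y x)
  simpa using this

lemma HS_ne_top {μ : Measure Ω} [IsProbabilityMeasure μ] {K : Ω → Ω → ℝ} (hK : BK K) :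
    HS μ K ≠ ⊤ := by
  obtain ⟨C, hC⟩ := hK.2
  exact ne_top_of_le_ne_top (by simp) (HS_le hC)

lemma app_memLp {μ : Measure Ω} [IsProbabilityMeasure μ] {K : Ω → Ω → ℝ} (hK : BK K)
    {f : Ω → ℂ} (hf : MemLp f 2 μ) : MemLp (app μ K f) 2 μ := by
  refine ⟨(app_aesm hK hf.1).aestronglyMeasurable, ?_⟩
  have h := app_sq_bound hK hf.1
  by_contra hc
  have hc' : eLpNorm (app μ K f) 2 μ = ⊤ := by simpa using hc
  rw [hc'] at h
  have : eLpNorm f 2 μ ^ 2 * HS μ K < ⊤ :=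
    ENNReal.mul_lt_top (by simpa using hf.2) (HS_ne_top hK).lt_top
  simp at h
  exact this.ne h

lemma app_add {μ : Measure Ω} [IsProbabilityMeasure μ] {K : Ω → Ω → ℝ} (hK : BK K)
    {f g : Ω → ℂ} (hf : MemLp f 2 μ) (hg : MemLp g 2 μ) :
    app μ K (f + g) = app μ K f + app μ K g := by
  funext x
  simp only [app, Pi.add_apply, add_mul]
  exact integral_add (hK.integrable_mul (hf.integrable (by norm_num)) x)
    (hK.integrable_mul (hg.integrable (by norm_num)) x)

lemma app_smul {μ : Measure Ω} {K : Ω → Ω → ℝ} (c : ℂ) (f : Ω → ℂ) :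
    app μ K (c • f) = c • app μ K f := by
  funext x
  simp only [app, Pi.smul_apply, smul_eq_mul, mul_assoc]
  exact integral_const_mul _ _

lemma exists_op {μ : Measure Ω} [IsProbabilityMeasure μ] {K : Ω → Ω → ℝ} (hK : BK K) :
    ∃ T : Lp ℂ 2 μ →L[ℂ] Lp ℂ 2 μ, ∀ f : Lp ℂ 2 μ, T f =ᵐ[μ] app μ K f := by
  let T0 : Lp ℂ 2 μ →ₗ[ℂ] Lp ℂ 2 μ :=
    { toFun := fun f => (app_memLp hK (Lp.memLp f)).toLp
      map_add' := by
        intro f g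
        rw [← MemLp.toLp_add]
        apply MemLp.toLp_congr
        rw [app_congr (Lp.coeFn_add f g), app_add hK (Lp.memLp f) (Lp.memLp g)]
      map_smul' := by
        intro c f
        rw [RingHom.id_apply, ← MemLp.toLp_const_smul]
        apply MemLp.toLp_congr
        rw [app_congr (Lp.coeFn_smul c f), app_smul] }
  have hb : ∀ f, ‖T0 f‖ ≤ Real.sqrt (HS μ K).toReal * ‖f‖ := by
    intro f
    have h := app_sq_bound (μ := μ) hK (Lp.memLp f).1
    have h1 : ‖T0 f‖ = (eLpNorm (app μ K f) 2 μ).toReal := Lp.norm_toLp _ (app_memLp hK (Lp.memLp f))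
    have h2 : ‖f‖ = (eLpNorm f 2 μ).toReal := Lp.norm_def f
    have h3 : ‖T0 f‖ ^ 2 ≤ ‖f‖ ^ 2 * (HS μ K).toReal := by
      rw [h1, h2, ← ENNReal.toReal_pow, ← ENNReal.toReal_pow, ← ENNReal.toReal_mul]
      refine ENNReal.toReal_mono ?_ h
      exact (ENNReal.mul_lt_top (by simpa using (Lp.memLp f).2) (HS_ne_top hK).lt_top).ne
    apply abs_le_of_sq_le_sq' _ (by positivity) |>.2
    rw [mul_pow, Real.sq_sqrt ENNReal.toReal_nonneg]
    linarith
  exact ⟨T0.mkContinuous _ hb, fun f => MemLp.coeFn_toLp (app_memLp hK (Lp.memLp f))⟩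

/-- The operator of a bounded kernel. -/
noncomputable def op (μ : Measure Ω) [IsProbabilityMeasure μ] {K : Ω → Ω → ℝ} (hK : BK K) :
    Lp ℂ 2 μ →L[ℂ] Lp ℂ 2 μ := (exists_op (μ := μ) hK).choose

lemma op_spec {μ : Measure Ω} [IsProbabilityMeasure μ] {K : Ω → Ω → ℝ} (hK : BK K)
    (f : Lp ℂ 2 μ) : op μ hK f =ᵐ[μ] app μ K f := (exists_op (μ := μ) hK).choose_spec f

lemma op_norm {μ : Measure Ω} [IsProbabilityMeasure μ] {K : Ω → Ω → ℝ} (hK : BK K) :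
    ‖op μ hK‖ ≤ Real.sqrt (HS μ K).toReal := by
  refine ContinuousLinearMap.opNorm_le_bound _ (by positivity) fun f => ?_
  have h := app_sq_bound (μ := μ) hK (Lp.memLp f).1
  have h1 : ‖op μ hK f‖ = (eLpNorm (app μ K f) 2 μ).toReal := by
    rw [Lp.norm_def, eLpNorm_congr_ae (op_spec hK f)]
  have h2 : ‖f‖ = (eLpNorm f 2 μ).toReal := Lp.norm_def f
  have h3 : ‖op μ hK f‖ ^ 2 ≤ ‖f‖ ^ 2 * (HS μ K).toReal := by
    rw [h1, h2, ← ENNReal.toReal_pow, ← ENNReal.toReal_pow, ← ENNReal.toReal_mul]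
    refine ENNReal.toReal_mono ?_ h
    exact (ENNReal.mul_lt_top (by simpa using (Lp.memLp f).2) (HS_ne_top hK).lt_top).ne
  apply abs_le_of_sq_le_sq' _ (by positivity) |>.2
  rw [mul_pow, Real.sq_sqrt ENNReal.toReal_nonneg]
  linarith

lemma BK.add {K L : Ω → Ω → ℝ} (hK : BK K) (hL : BK L) : BK (K + L) := by
  obtain ⟨C, hC⟩ := hK.2
  obtain ⟨C', hC'⟩ := hL.2
  exact ⟨hK.1.add hL.1, C + C', fun x y => (abs_add_le _ _).trans (add_le_add (hC x y) (hC' x y))⟩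

lemma BK.sub {K L : Ω → Ω → ℝ} (hK : BK K) (hL : BK L) : BK (K - L) := by
  obtain ⟨C, hC⟩ := hK.2
  obtain ⟨C', hC'⟩ := hL.2
  exact ⟨hK.1.sub hL.1, C + C', fun x y => (abs_sub _ _).trans (add_le_add (hC x y) (hC' x y))⟩

lemma op_add {μ : Measure Ω} [IsProbabilityMeasure μ] {K L : Ω → Ω → ℝ} (hK : BK K) (hL : BK L)
    (hKL : BK (K + L)) : op μ hKL = op μ hK + op μ hL := by
  ext1 f
  apply Lp.ext
  filter_upwards [op_spec hK f, op_spec hL f, op_spec hKL f,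
    Lp.coeFn_add (op μ hK f) (op μ hL f)] with x h1 h2 h3 h4
  rw [add_apply, h4, Pi.add_apply, h1, h2, h3]
  have hf : Integrable f μ := (Lp.memLp f).integrable (by norm_num)
  simp only [app]
  rw [← integral_add (hK.integrable_mul hf x) (hL.integrable_mul hf x)]
  refine integral_congr_ae (ae_of_all _ fun y => ?_)
  simp only [Pi.add_apply]
  push_cast
  ring

lemma op_sub {μ : Measure Ω} [IsProbabilityMeasure μ] {K L : Ω → Ω → ℝ} (hK : BK K) (hL : BK L)
    (hKL : BK (K - L)) : op μ hKL = op μ hK - op μ hL := by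
  have := op_add (μ := μ) hKL hL (by simpa using hK)
  rw [eq_sub_iff_add_eq, ← this]
  congr 1
  simp

/-- Kernels with compact operator. -/
def CK (μ : Measure Ω) [IsProbabilityMeasure μ] (K : Ω → Ω → ℝ) : Prop :=
  ∃ hK : BK K, IsCompactOperator (op μ hK)

lemma CK.add {μ : Measure Ω} [IsProbabilityMeasure μ] {K L : Ω → Ω → ℝ} (hK : CK μ K)
    (hL : CK μ L) : CK μ (K + L) := by
  obtain ⟨a, ha⟩ := hK
  obtain ⟨b, hb⟩ := hL
  refine ⟨a.add b, ?_⟩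
  rw [op_add a b]
  exact ha.add hb

lemma CK.sub {μ : Measure Ω} [IsProbabilityMeasure μ] {K L : Ω → Ω → ℝ} (hK : CK μ K)
    (hL : CK μ L) : CK μ (K - L) := by
  obtain ⟨a, ha⟩ := hK
  obtain ⟨b, hb⟩ := hL
  refine ⟨a.sub b, ?_⟩
  rw [op_sub a b]
  exact ha.sub hb

lemma CK.limit {μ : Measure Ω} [IsProbabilityMeasure μ] {K : ℕ → Ω → Ω → ℝ} {L : Ω → Ω → ℝ}
    (hK : ∀ n, CK μ (K n)) (C : ℝ) (hC : ∀ n x y, |K n x y| ≤ C)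
    (hlim : ∀ x y, Tendsto (fun n => K n x y) atTop (𝓝 (L x y))) : CK μ L := by
  have hLb : ∀ x y, |L x y| ≤ C := fun x y =>
    le_of_tendsto (hlim x y).abs (Eventually.of_forall fun n => hC n x y)
  have hLm : Measurable (Function.uncurry L) :=
    measurable_of_tendsto_metrizable (fun n => (hK n).1.1)
      (tendsto_pi_nhds.2 fun p => hlim p.1 p.2)
  have hL : BK L := ⟨hLm, C, hLb⟩
  refine ⟨hL, ?_⟩
  have hdiff : ∀ n, BK (K n - L) := fun n => (hK n).1.sub hL
  have hmeas : ∀ n, Measurable (fun p : Ω × Ω => ‖(K n - L) p.2 p.1‖ₑ ^ 2) := fun n =>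
    (((hdiff n).1.comp measurable_swap).enorm).pow_const 2
  have hHS : Tendsto (fun n => HS μ (K n - L)) atTop (𝓝 0) := by
    have : ∀ n, HS μ (K n - L) = ∫⁻ p : Ω × Ω, ‖(K n - L) p.2 p.1‖ₑ ^ 2 ∂(μ.prod μ) := fun n => by
      rw [lintegral_prod _ (hmeas n).aemeasurable]; rfl
    simp only [this]
    have h0 : (0 : ℝ≥0∞) = ∫⁻ p : Ω × Ω, 0 ∂(μ.prod μ) := by simp
    rw [h0]
    refine tendsto_lintegral_of_dominated_convergence (fun _ => ENNReal.ofReal (C + C) ^ 2)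
      hmeas ?_ ?_ ?_
    · intro n
      refine ae_of_all _ fun p => ?_
      refine pow_le_pow_left' ?_ 2
      rw [← ofReal_norm]
      refine ENNReal.ofReal_le_ofReal ?_
      exact (abs_sub _ _).trans (add_le_add (hC n _ _) (hLb _ _))
    · simp
    · refine ae_of_all _ fun p => ?_
      have h1 : Tendsto (fun n => (K n - L) p.2 p.1) atTop (𝓝 0) := by
        simpa using (hlim p.2 p.1).sub_const (L p.2 p.1)
      have h2 := (ENNReal.continuous_pow 2).tendsto _ |>.comp
        ((continuous_enorm.tendsto _).comp h1)
      simpa [Function.comp_def] using h2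
  refine isCompactOperator_of_tendsto (F := fun n => op μ (hK n).1) (l := atTop) ?_
    (Eventually.of_forall fun n => (hK n).2)
  rw [tendsto_iff_norm_sub_tendsto_zero]
  have hs : Tendsto (fun n => Real.sqrt (HS μ (K n - L)).toReal) atTop (𝓝 0) := by
    have h1 := (ENNReal.tendsto_toReal ENNReal.zero_ne_top).comp hHS
    have h2 := (Real.continuous_sqrt.tendsto _).comp h1
    simpa [Function.comp_def] using h2
  refine squeeze_zero (fun n => norm_nonneg _) (fun n => ?_) hs
  rw [← op_sub (hK n).1 hL (hdiff n)]
  exact op_norm _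

lemma rank_one_compact {E : Type*} [NormedAddCommGroup E] [NormedSpace ℂ E] (g : E)
    (φ : E →L[ℂ] ℂ) : IsCompactOperator ((ContinuousLinearMap.toSpanSingleton ℂ g).comp φ) := by
  have : IsCompactOperator (ContinuousLinearMap.toSpanSingleton ℂ g) :=
    isCompactOperator_of_locallyCompactSpace_rng (ContinuousLinearMap.toSpanSingleton ℂ g)
  exact this.comp_clm φ

lemma exists_indicator {μ : Measure Ω} [IsProbabilityMeasure μ] {A : Set Ω} (hA : MeasurableSet A)
    (c : ℂ) : ∃ g : Lp ℂ 2 μ, g =ᵐ[μ] A.indicator (fun _ => c) := by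
  have h : MemLp (A.indicator (fun _ => c)) 2 μ := (memLp_const c).indicator hA
  exact ⟨h.toLp, h.coeFn_toLp⟩

lemma exists_functional {μ : Measure Ω} [IsProbabilityMeasure μ] {A : Set Ω}
    (hA : MeasurableSet A) (c : ℝ) : ∃ φ : Lp ℂ 2 μ →L[ℂ] ℂ,
      ∀ f : Lp ℂ 2 μ, φ f = ∫ y, f y * (A.indicator (fun _ => (c : ℂ)) y) ∂μ := by
  obtain ⟨a, ha⟩ := exists_indicator (μ := μ) hA (c : ℂ)
  refine ⟨innerSL ℂ a, fun f => ?_⟩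
  rw [innerSL_apply_apply, L2.inner_def]
  apply integral_congr_ae
  filter_upwards [ha] with y hy
  rw [hy]
  by_cases hyA : y ∈ A <;> simp [hyA]

lemma op_rect {μ : Measure Ω} [IsProbabilityMeasure μ] {A B : Set Ω} {c : ℝ} {K : Ω → Ω → ℝ}
    (hb : BK K) (hK : ∀ x y, K x y = (A ×ˢ B).indicator (fun _ => c) (x, y))
    (g : Lp ℂ 2 μ) (hg : g =ᵐ[μ] B.indicator (fun _ => (1 : ℂ))) (φ : Lp ℂ 2 μ →L[ℂ] ℂ)
    (hφ1 : ∀ f : Lp ℂ 2 μ, φ f = ∫ y, f y * (A.indicator (fun _ => (c : ℂ)) y) ∂μ) :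
    op μ hb = (ContinuousLinearMap.toSpanSingleton ℂ g).comp φ := by
  ext1 f
  apply Lp.ext
  rw [ContinuousLinearMap.comp_apply, ContinuousLinearMap.toSpanSingleton_apply]
  filter_upwards [op_spec hb f, hg, Lp.coeFn_smul (φ f) g] with x h1 h2 h3
  rw [h1, h3, Pi.smul_apply, h2]
  rw [hφ1, app, smul_eq_mul, ← integral_mul_const]
  refine integral_congr_ae (ae_of_all _ fun y => ?_)
  beta_reduce
  rw [hK]
  by_cases hyA : y ∈ A <;> by_cases hxB : x ∈ B <;> simp [hyA, hxB]

lemma CK.rect {μ : Measure Ω} [IsProbabilityMeasure μ] {A B : Set Ω} (hA : MeasurableSet A)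
    (hB : MeasurableSet B) (c : ℝ) :
    CK μ (fun x y => (A ×ˢ B).indicator (fun _ => c) (x, y)) := by
  have hb : BK (fun x y => (A ×ˢ B).indicator (fun _ => c) (x, y)) := by
    refine ⟨measurable_const.indicator (hA.prod hB), |c|, fun x y => ?_⟩
    beta_reduce
    by_cases h : (x, y) ∈ A ×ˢ B
    · rw [Set.indicator_of_mem h]
    · rw [Set.indicator_of_notMem h]; simp
  refine ⟨hb, ?_⟩
  obtain ⟨g, hg⟩ := exists_indicator (μ := μ) hB (1 : ℂ)
  obtain ⟨φ, hφ⟩ := exists_functional (μ := μ) hA c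
  rw [op_rect hb (fun _ _ => rfl) g hg φ hφ]
  exact rank_one_compact g φ

lemma CK.set {μ : Measure Ω} [IsProbabilityMeasure μ] {S : Set (Ω × Ω)} (hS : MeasurableSet S)
    (c : ℝ) : CK μ (fun x y => S.indicator (fun _ => c) (x, y)) := by
  induction S, hS using MeasurableSpace.induction_on_inter generateFrom_prod.symm isPiSystem_prod with
  | empty => simpa using CK.rect (μ := μ) MeasurableSet.empty MeasurableSet.empty c
  | basic t ht =>
    obtain ⟨A, hA, B, hB, rfl⟩ := ht
    exact CK.rect hA hB c
  | compl t ht ih =>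
    have h := (CK.rect (μ := μ) MeasurableSet.univ MeasurableSet.univ c).sub ih
    convert h using 1
    funext x y
    by_cases hp : (x, y) ∈ t <;> simp [hp]
  | iUnion f hd hm ih =>
    have hfin : ∀ n : ℕ, CK μ (fun x y => (⋃ i ∈ Finset.range n, f i).indicator (fun _ => c) (x, y)) := by
      intro n
      induction n with
      | zero => simpa using CK.rect (μ := μ) MeasurableSet.empty MeasurableSet.empty c
      | succ n ihn =>
        have h := ihn.add (ih n)
        convert h using 1
        funext x y
        have hdis : Disjoint (⋃ i ∈ Finset.range n, f i) (f n) := by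
          simp only [Set.disjoint_iUnion_left, Finset.mem_range]
          intro i hi
          exact hd (by omega)
        have hu : (⋃ i ∈ Finset.range (n + 1), f i) = (⋃ i ∈ Finset.range n, f i) ∪ f n := by
          rw [Finset.range_add_one, Finset.set_biUnion_insert, Set.union_comm]
        rw [hu, Set.indicator_union_of_disjoint hdis]
        rfl
    refine CK.limit hfin |c| ?_ ?_
    · intro n x y
      by_cases hp : (x, y) ∈ ⋃ i ∈ Finset.range n, f i
      · rw [Set.indicator_of_mem hp]
      · rw [Set.indicator_of_notMem hp]; simp
    · intro x y
      by_cases hp : (x, y) ∈ ⋃ i, f i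
      · obtain ⟨i, hi⟩ := Set.mem_iUnion.1 hp
        refine tendsto_const_nhds.congr' ?_
        filter_upwards [eventually_gt_atTop i] with n hn
        rw [Set.indicator_of_mem hp, Set.indicator_of_mem]
        exact Set.mem_biUnion (Finset.mem_coe.2 (Finset.mem_range.2 hn)) hi
      · refine tendsto_const_nhds.congr fun n => ?_
        rw [Set.indicator_of_notMem hp, Set.indicator_of_notMem]
        intro h
        simp only [Set.mem_iUnion] at h hp
        obtain ⟨i, _, hi⟩ := h
        exact hp ⟨i, hi⟩

lemma CK.of_BK {μ : Measure Ω} [IsProbabilityMeasure μ] {K : Ω → Ω → ℝ} (hK : BK K) : CK μ K := by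
  obtain ⟨C, hC⟩ := hK.2
  rcases isEmpty_or_nonempty Ω with hE | ⟨⟨x0⟩⟩
  · have := CK.rect (μ := μ) MeasurableSet.empty MeasurableSet.empty 0
    have h0 : K = fun x y => ((∅ : Set Ω) ×ˢ (∅ : Set Ω)).indicator (fun _ => (0 : ℝ)) (x, y) :=
      funext fun x => hE.elim x
    rw [h0]
    exact this
  have hC0 : 0 ≤ C := (abs_nonneg _).trans (hC x0 x0)
  have hsimple : ∀ s : SimpleFunc (Ω × Ω) ℝ, CK μ (fun x y => s (x, y)) := by
    intro s
    induction s using SimpleFunc.induction with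
    | const c hs =>
      convert CK.set (μ := μ) hs c using 1
      funext x y
      simp [SimpleFunc.coe_piecewise, Set.indicator, Set.piecewise]
    | add _ h1 h2 => exact h1.add h2
  have hm : StronglyMeasurable (Function.uncurry K) := hK.1.stronglyMeasurable
  refine CK.limit (K := fun n x y => hm.approxBounded C n (x, y)) (fun n => hsimple _) C ?_ ?_
  · intro n x y
    exact hm.norm_approxBounded_le hC0 n (x, y)
  · intro x y
    exact hm.tendsto_approxBounded_of_norm_le (x := (x, y)) (hC x y)

lemma op_compact {μ : Measure Ω} [IsProbabilityMeasure μ] {K : Ω → Ω → ℝ} (hK : BK K) :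
    IsCompactOperator (op μ hK) := (CK.of_BK (μ := μ) hK).2

/-! ### Kernel powers -/

noncomputable def kcomp (μ : Measure Ω) (K L : Ω → Ω → ℝ) : Ω → Ω → ℝ :=
  fun x y => ∫ z, K x z * L z y ∂μ

lemma kpowAux_succ (μ : Measure Ω) (Γ : Ω → Ω → ℝ) (n : ℕ) :
    kpowAux μ Γ (n + 1) = kcomp μ Γ (kpowAux μ Γ n) := rfl

lemma BK.kcomp {μ : Measure Ω} [IsProbabilityMeasure μ] {K L : Ω → Ω → ℝ} (hK : BK K)
    (hL : BK L) : BK (kcomp μ K L) := by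
  constructor
  · have h1 : Measurable (fun q : (Ω × Ω) × Ω => K q.1.1 q.2 * L q.2 q.1.2) :=
      (hK.1.comp ((measurable_fst.comp measurable_fst).prodMk measurable_snd)).mul
        (hL.1.comp (measurable_snd.prodMk (measurable_snd.comp measurable_fst)))
    exact (h1.stronglyMeasurable.integral_prod_right' (ν := μ)).measurable
  · obtain ⟨C, hC⟩ := hK.2
    obtain ⟨C', hC'⟩ := hL.2
    refine ⟨C * C', fun x y => ?_⟩
    have h := norm_integral_le_of_norm_le_const (μ := μ) (C := C * C')
      (f := fun z => K x z * L z y) (ae_of_all _ fun z => by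
        rw [norm_mul]
        exact mul_le_mul (hC x z) (hC' z y) (abs_nonneg _) ((abs_nonneg _).trans (hC x z)))
    simpa [Digraphon.kcomp] using h

lemma IsDigraphon.BK {Γ : Ω → Ω → ℝ} (h : IsDigraphon Γ) : BK Γ :=
  ⟨h.1, 1, fun x y => abs_le.2 ⟨by linarith [(h.2 x y).1], (h.2 x y).2⟩⟩

lemma BK.kpowAux {μ : Measure Ω} [IsProbabilityMeasure μ] {K : Ω → Ω → ℝ} (hK : BK K) (n : ℕ) :
    BK (kpowAux μ K n) := by
  induction n with
  | zero => exact hK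
  | succ n ih => exact hK.kcomp ih

lemma BK.dpow {μ : Measure Ω} [IsProbabilityMeasure μ] {K : Ω → Ω → ℝ} (hK : BK K) (n : ℕ) :
    BK (dpow μ K n) := hK.kpowAux _

lemma kpowAux_nonneg {μ : Measure Ω} {K : Ω → Ω → ℝ} (hK : ∀ x y, 0 ≤ K x y) (n : ℕ) (x y : Ω) :
    0 ≤ kpowAux μ K n x y := by
  induction n generalizing x y with
  | zero => exact hK x y
  | succ n ih => exact integral_nonneg fun z => mul_nonneg (hK x z) (ih z y)

lemma app_kcomp {μ : Measure Ω} [IsProbabilityMeasure μ] {K L : Ω → Ω → ℝ} (hK : BK K)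
    (hL : BK L) {f : Ω → ℂ} (hf : Integrable f μ) :
    app μ (kcomp μ K L) f = app μ L (app μ K f) := by
  funext x
  simp only [app, kcomp]
  have h1 : ∀ y, f y * ((∫ z, K y z * L z x ∂μ : ℝ) : ℂ)
      = ∫ z, f y * (K y z : ℂ) * (L z x : ℂ) ∂μ := by
    intro y
    rw [← integral_complex_ofReal, ← integral_const_mul]
    refine integral_congr_ae (ae_of_all _ fun z => ?_)
    push_cast
    ring
  simp only [h1]
  rw [integral_integral_swap]
  · refine integral_congr_ae (ae_of_all _ fun z => ?_)
    exact integral_mul_const _ _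
  · obtain ⟨C, hC⟩ := hK.2
    obtain ⟨C', hC'⟩ := hL.2
    have h2 : Integrable (fun p : Ω × Ω => f p.1) (μ.prod μ) := hf.comp_fst μ
    have h3 : Integrable (fun p : Ω × Ω => f p.1 * (K p.1 p.2 : ℂ)) (μ.prod μ) := by
      refine h2.mul_bdd (c := C) ?_ ?_
      · exact (Complex.measurable_ofReal.comp hK.1).aestronglyMeasurable
      · exact ae_of_all _ fun y => by simpa using hC y.1 y.2
    refine h3.mul_bdd (c := C') ?_ ?_
    · exact (Complex.measurable_ofReal.comp
        ((hL.meas_left x).comp measurable_snd)).aestronglyMeasurable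
    · exact ae_of_all _ fun y => by simpa using hC' y.2 x

lemma app_ofReal {μ : Measure Ω} {K : Ω → Ω → ℝ} (f : Ω → ℝ) (x : Ω) :
    app μ K (fun y => (f y : ℂ)) x = ((∫ y, f y * K y x ∂μ : ℝ) : ℂ) := by
  rw [app, ← integral_complex_ofReal]
  refine integral_congr_ae (ae_of_all _ fun z => ?_)
  simp

lemma BK.integrable_right {μ : Measure Ω} [IsProbabilityMeasure μ] {K : Ω → Ω → ℝ} (hK : BK K)
    (x : Ω) : Integrable (fun y => K x y) μ := by
  obtain ⟨C, hC⟩ := hK.2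
  exact Integrable.of_bound (hK.meas_right x).aestronglyMeasurable C (ae_of_all _ fun y => hC x y)

lemma kcomp_assoc {μ : Measure Ω} [IsProbabilityMeasure μ] {K L M : Ω → Ω → ℝ} (hK : BK K)
    (hL : BK L) (hM : BK M) : kcomp μ (kcomp μ K L) M = kcomp μ K (kcomp μ L M) := by
  funext x y
  have h := congrFun (app_kcomp (μ := μ) hL hM (f := fun z => (K x z : ℂ))
    (hK.integrable_right x).ofReal) y
  rw [app_ofReal] at h
  have h2 : app μ L (fun z => (K x z : ℂ)) = fun z => ((kcomp μ K L x z : ℝ) : ℂ) := by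
    funext z
    rw [app_ofReal]; rfl
  rw [h2, app_ofReal] at h
  exact (Complex.ofReal_injective h).symm

lemma kpowAux_add {μ : Measure Ω} [IsProbabilityMeasure μ] {K : Ω → Ω → ℝ} (hK : BK K) (m n : ℕ) :
    kpowAux μ K (m + n + 1) = kcomp μ (kpowAux μ K m) (kpowAux μ K n) := by
  induction m with
  | zero => rw [Nat.zero_add]; rfl
  | succ m ih =>
    rw [show m + 1 + n + 1 = (m + n + 1) + 1 by ring, kpowAux_succ, ih, kpowAux_succ,
      kcomp_assoc hK (hK.kpowAux m) (hK.kpowAux n)]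

lemma kpowAux_dpow {μ : Measure Ω} [IsProbabilityMeasure μ] {K : Ω → Ω → ℝ} (hK : BK K) {D : ℕ}
    (hD : D ≠ 0) (n : ℕ) : kpowAux μ (dpow μ K D) n = dpow μ K (D * (n + 1)) := by
  induction n with
  | zero => simp [kpowAux]
  | succ n ih =>
    rw [kpowAux_succ, ih]
    obtain ⟨e, rfl⟩ := Nat.exists_eq_succ_of_ne_zero hD
    have h := kpowAux_add (μ := μ) hK e (e.succ * (n + 1) - 1)
    have h1 : 1 ≤ e.succ * (n + 1) := Nat.mul_pos (by simp) (by simp)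
    rw [dpow, dpow, dpow]
    have h2 : e.succ * (n + 1 + 1) - 1 = e + (e.succ * (n + 1) - 1) + 1 := by
      have : e.succ * (n + 1 + 1) = e.succ * (n + 1) + e.succ := by ring
      omega
    rw [h2, h]
    rfl

lemma kpowAux_transpose {μ : Measure Ω} [IsProbabilityMeasure μ] {K : Ω → Ω → ℝ} (hK : BK K)
    (n : ℕ) : kpowAux μ (fun x y => K y x) n = fun x y => kpowAux μ K n y x := by
  induction n with
  | zero => rfl
  | succ n ih =>
    rw [kpowAux_succ, ih]
    have h := kpowAux_add (μ := μ) hK n 0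
    rw [Nat.add_zero] at h
    rw [h]
    funext x y
    simp only [kcomp]
    refine integral_congr_ae (ae_of_all _ fun z => ?_)
    simp only [kpowAux]
    ring

/-! ### Vanishing -/

/-- From `A`, the kernel `K` only leads to `B`. -/
def Van (μ : Measure Ω) (K : Ω → Ω → ℝ) (A B : Set Ω) : Prop :=
  ∀ᵐ p ∂(μ.prod μ), p.1 ∈ A → p.2 ∉ B → K p.1 p.2 = 0

lemma ae_fst {μ : Measure Ω} [SFinite μ] {Q : Ω → Prop} (h : ∀ᵐ x ∂μ, Q x) :
    ∀ᵐ p ∂(μ.prod μ), Q p.1 := Measure.quasiMeasurePreserving_fst.ae h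

lemma ae_snd {μ : Measure Ω} [SFinite μ] {Q : Ω → Prop} (h : ∀ᵐ x ∂μ, Q x) :
    ∀ᵐ p ∂(μ.prod μ), Q p.2 := Measure.quasiMeasurePreserving_snd.ae h

lemma ae_swap {μ : Measure Ω} [SFinite μ] {Q : Ω × Ω → Prop} (h : ∀ᵐ p ∂(μ.prod μ), Q p) :
    ∀ᵐ p ∂(μ.prod μ), Q p.swap :=
  (Measure.measurePreserving_swap (μ := μ) (ν := μ)).quasiMeasurePreserving.ae h

lemma Van.comp {μ : Measure Ω} [SFinite μ] {K L : Ω → Ω → ℝ} {A B C : Set Ω}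
    (hK : Van μ K A B) (hL : Van μ L B C) : Van μ (kcomp μ K L) A C := by
  have h1 := ae_fst (Measure.ae_ae_of_ae_prod hK)
  have h2 := ae_snd (Measure.ae_ae_of_ae_prod (ae_swap hL))
  filter_upwards [h1, h2] with p hp1 hp2 hA hC
  apply integral_eq_zero_of_ae
  filter_upwards [hp1, hp2] with z hz1 hz2
  by_cases hz : z ∈ B
  · have : L z p.2 = 0 := hz2 hz hC
    simp [this]
  · simp [hz1 hA hz]

lemma Van.pow {μ : Measure Ω} [SFinite μ] {K : Ω → Ω → ℝ} {d : ℕ} {P : ZMod d → Set Ω}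
    (h : ∀ j, Van μ K (P j) (P (j + 1))) (n : ℕ) (j : ZMod d) :
    Van μ (kpowAux μ K n) (P j) (P (j + n + 1)) := by
  induction n generalizing j with
  | zero => simpa [kpowAux] using h j
  | succ n ih =>
    have h1 := (h j).comp (ih (j + 1))
    rw [kpowAux_succ]
    convert h1 using 2
    push_cast
    ring

lemma Van.pow_self {μ : Measure Ω} [SFinite μ] {K : Ω → Ω → ℝ} {A : Set Ω}
    (h : Van μ K A A) (n : ℕ) : Van μ (kpowAux μ K n) A A := by
  induction n with
  | zero => exact h
  | succ n ih => exact h.comp ih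

lemma IsPeriodicityWitness.van {μ : Measure Ω} {Γ : Ω → Ω → ℝ} {d : ℕ} {P : ZMod d → Set Ω}
    (h : IsPeriodicityWitness μ Γ P) (j : ZMod d) : Van μ Γ (P j) (P (j + 1)) := by
  have := h.2.2.2 j
  rw [Van, ae_iff]
  convert this using 2
  ext p
  simp

lemma van_iff {μ : Measure Ω} [SFinite μ] {K : Ω → Ω → ℝ} (hK : BK K) {A B : Set Ω}
    (hA : MeasurableSet A) (hB : MeasurableSet B) :
    Van μ K A B ↔ ∀ᵐ x ∂μ, ∀ᵐ y ∂μ, x ∈ A → y ∉ B → K x y = 0 := by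
  refine ⟨fun h => Measure.ae_ae_of_ae_prod h, fun h => ?_⟩
  have hm : MeasurableSet {p : Ω × Ω | p.1 ∈ A → p.2 ∉ B → K p.1 p.2 = 0} := by
    have h1 : MeasurableSet {p : Ω × Ω | p.1 ∈ A} := measurable_fst hA
    have h2 : MeasurableSet {p : Ω × Ω | p.2 ∈ B} := measurable_snd hB
    have h3 : MeasurableSet {p : Ω × Ω | K p.1 p.2 = 0} := hK.1 (measurableSet_singleton 0)
    have : {p : Ω × Ω | p.1 ∈ A → p.2 ∉ B → K p.1 p.2 = 0}
      = {p : Ω × Ω | p.1 ∈ A}ᶜ ∪ {p : Ω × Ω | p.2 ∈ B} ∪ {p : Ω × Ω | K p.1 p.2 = 0} := by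
      ext p
      simp only [Set.mem_ofPred_eq, Set.mem_union, Set.mem_compl_iff]
      tauto
    rw [this]
    exact (h1.compl.union h2).union h3
  exact (Measure.ae_prod_mem_iff_ae_ae_mem hm).2 h

lemma BK.integrable_prod {μ : Measure Ω} [IsProbabilityMeasure μ] {K : Ω → Ω → ℝ} (hK : BK K) :
    Integrable (Function.uncurry K) (μ.prod μ) := by
  obtain ⟨C, hC⟩ := hK.2
  exact Integrable.of_bound hK.1.aestronglyMeasurable C (ae_of_all _ fun y => hC _ _)

lemma setint_eq {μ : Measure Ω} [IsProbabilityMeasure μ] {K : Ω → Ω → ℝ} (hK : BK K)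
    (A B : Set Ω) : ∫ x in A, ∫ y in B, K x y ∂μ ∂μ
      = ∫ p in A ×ˢ B, Function.uncurry K p ∂(μ.prod μ) :=
  (setIntegral_prod (Function.uncurry K) hK.integrable_prod.integrableOn).symm

lemma setint_zero {μ : Measure Ω} [IsProbabilityMeasure μ] {K : Ω → Ω → ℝ} (hK : BK K)
    {A B : Set Ω}
    (h : ∀ᵐ p ∂(μ.prod μ), p.1 ∈ A → p.2 ∈ B → K p.1 p.2 = 0) :
    ∫ x in A, ∫ y in B, K x y ∂μ ∂μ = 0 := by
  rw [setint_eq hK]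
  apply setIntegral_eq_zero_of_ae_eq_zero
  filter_upwards [h] with p hp hpm
  exact hp hpm.1 hpm.2

lemma ae_zero_of_setint {μ : Measure Ω} [IsProbabilityMeasure μ] {K : Ω → Ω → ℝ} (hK : BK K)
    (h0 : ∀ x y, 0 ≤ K x y) {A B : Set Ω} (hA : MeasurableSet A) (hB : MeasurableSet B)
    (h : ¬ 0 < ∫ x in A, ∫ y in B, K x y ∂μ ∂μ) :
    ∀ᵐ p ∂(μ.prod μ), p.1 ∈ A → p.2 ∈ B → K p.1 p.2 = 0 := by
  rw [setint_eq hK] at h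
  have h1 : ∫ p in A ×ˢ B, Function.uncurry K p ∂(μ.prod μ) = 0 :=
    le_antisymm (not_lt.1 h) (integral_nonneg fun p => h0 _ _)
  rw [integral_eq_zero_iff_of_nonneg (f := Function.uncurry K) (fun p => h0 _ _)
    hK.integrable_prod.integrableOn] at h1
  have h2 := (ae_restrict_iff' (hA.prod hB)).1 h1
  filter_upwards [h2] with p hp ha hb
  exact hp ⟨ha, hb⟩

lemma prod_false {μ : Measure Ω} [IsProbabilityMeasure μ] {A B : Set Ω} (hA : μ A ≠ 0)
    (hB : μ B ≠ 0) (h : ∀ᵐ p ∂(μ.prod μ), p.1 ∈ A → p.2 ∈ B → False) : False := by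
  rw [ae_iff] at h
  have : {p : Ω × Ω | ¬ (p.1 ∈ A → p.2 ∈ B → False)} = A ×ˢ B := by
    ext p; simp
  rw [this, Measure.prod_prod] at h
  exact (mul_ne_zero hA hB) h

/-- The eventual positivity of the powers of `G` on `X × X`. -/
def EvPos (μ : Measure Ω) (G : Ω → Ω → ℝ) (X : Set Ω) : Prop :=
  ∀ᵐ p ∂(μ.prod μ), p.1 ∈ X → p.2 ∈ X → ∃ k : ℕ, ∀ n, k ≤ n → 0 < kpowAux μ G n p.1 p.2

lemma evPos_of_reach {μ : Measure Ω} [IsProbabilityMeasure μ] {Γ : Ω → Ω → ℝ} (hΓ : BK Γ)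
    {D : ℕ} (hD : D ≠ 0) {X : Set Ω} (h : ∀ᵐ p : Ω × Ω ∂(μ.prod μ), p.1 ∈ X → p.2 ∈ X →
      EvPeriodic D 0 (reachSeq μ Γ p.1 p.2)) : EvPos μ (dpow μ Γ D) X := by
  filter_upwards [h] with p hp h1 h2
  obtain ⟨-, k, hk⟩ := hp h1 h2
  refine ⟨k, fun n hn => ?_⟩
  rw [kpowAux_dpow hΓ hD]
  refine ((hk (D * (n + 1)) ?_).1 ?_).2
  · have : 1 * (n + 1) ≤ D * (n + 1) := Nat.mul_le_mul_right _ (Nat.one_le_iff_ne_zero.2 hD)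
    omega
  · simp

lemma strongComponent_of {μ : Measure Ω} [IsProbabilityMeasure μ] {G : Ω → Ω → ℝ} (hG : BK G)
    (h0 : ∀ x y, 0 ≤ G x y) {X : Set Ω} (hX : MeasurableSet X) (hXpos : μ X ≠ 0)
    (hvan : Van μ G X X) (hpos : EvPos μ G X) : StrongComponent μ G X := by
  refine ⟨⟨hX, pos_iff_ne_zero.2 hXpos, ?_⟩, ?_⟩
  · intro A B hA hB hAB hdis hApos hBpos
    by_contra hc
    have h1 := ae_zero_of_setint hG h0 hA hB hc
    have h2 : Van μ G A A := by
      filter_upwards [h1, hvan] with p hp1 hp2 ha hna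
      by_cases hx : p.2 ∈ X
      · rw [← hAB] at hx
        exact hp1 ha (hx.resolve_left hna)
      · exact hp2 (hAB ▸ Or.inl ha) hx
    have h3 : ∀ᵐ p ∂(μ.prod μ), ∀ n, p.1 ∈ A → p.2 ∉ A → kpowAux μ G n p.1 p.2 = 0 :=
      ae_all_iff.2 fun n => h2.pow_self n
    refine prod_false hApos.ne' hBpos.ne' ?_
    filter_upwards [h3, hpos] with p hp3 hpp ha hb
    obtain ⟨k, hk⟩ := hpp (hAB ▸ Or.inl ha) (hAB ▸ Or.inr hb)
    have := hk k le_rfl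
    rw [hp3 k ha (fun h => Set.disjoint_left.1 hdis h hb)] at this
    exact this.false
  · intro Y hY h1 h2 hc
    have h3 := hc.2.2 (X ∩ Y) (Y \ X) (hX.inter hY) (hY.diff hX)
      (by rw [Set.inter_comm]; exact Set.inter_union_sdiff Y X)
      (Set.disjoint_left.2 fun x hx hx' => hx'.2 hx.1) h1 h2
    rw [setint_zero hG] at h3
    · exact h3.false
    · filter_upwards [hvan] with p hp ha hb
      exact hp ha.1 hb.2

lemma ae_subMeasure_iff {μ : Measure Ω} [IsProbabilityMeasure μ] {X : Set Ω}
    (hX : MeasurableSet X) {Q : X → Prop} :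
    (∀ᵐ a ∂(subMeasure μ X), Q a) ↔ ∀ᵐ x ∂μ, ∀ hx : x ∈ X, Q ⟨x, hx⟩ := by
  rw [ae_iff, ae_iff, subMeasure, Measure.smul_apply, comap_subtype_coe_apply hX, smul_eq_mul,
    mul_eq_zero, or_iff_right (ENNReal.inv_ne_zero.2 (measure_ne_top μ X))]
  have : (Subtype.val '' {a : X | ¬ Q a}) = {x | ¬ ∀ hx : x ∈ X, Q ⟨x, hx⟩} := by
    ext x
    simp
  rw [this]

lemma subMeasure_isProb {μ : Measure Ω} [IsProbabilityMeasure μ] {X : Set Ω}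
    (hX : MeasurableSet X) (hpos : μ X ≠ 0) : IsProbabilityMeasure (subMeasure μ X) := by
  constructor
  rw [subMeasure, Measure.smul_apply, comap_subtype_coe_apply hX, smul_eq_mul]
  simp only [Set.image_univ, Subtype.range_coe_subtype]
  exact ENNReal.inv_mul_cancel hpos (measure_ne_top μ X)

lemma aperiodic_of {μ : Measure Ω} [IsProbabilityMeasure μ] {G : Ω → Ω → ℝ} (hG : BK G)
    {X : Set Ω} (hX : MeasurableSet X) (hXpos : μ X ≠ 0)
    (hvan : Van μ G X X) (hpos : EvPos μ G X) :
    Aperiodic (subMeasure μ X) (subKernel G X) := by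
  have := subMeasure_isProb hX hXpos
  rintro d hd ⟨Q, hQ⟩
  by_contra hd1
  have hm : ∀ j, MeasurableSet (Subtype.val '' Q j) := fun j =>
    (MeasurableEmbedding.subtype_coe hX).measurableSet_image.2 (hQ.1 j)
  have hsub : ∀ j, Subtype.val '' Q j ⊆ X := by
    rintro j _ ⟨a, -, rfl⟩
    exact a.2
  have hv : ∀ j, Van μ G (Subtype.val '' Q j) (Subtype.val '' Q (j + 1)) := by
    intro j
    rw [van_iff hG (hm _) (hm _)]
    have h1 := Measure.ae_ae_of_ae_prod (hQ.van j)
    rw [ae_subMeasure_iff hX] at h1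
    simp only [ae_subMeasure_iff hX] at h1
    have h2 := Measure.ae_ae_of_ae_prod hvan
    filter_upwards [h1, h2] with x hx1 hx2
    by_cases hxX : x ∈ X
    · filter_upwards [hx1 hxX, hx2] with y hy1 hy2 hxQ hyQ
      by_cases hyX : y ∈ X
      · refine hy1 hyX ?_ ?_
        · obtain ⟨a, ha, rfl⟩ := hxQ
          exact ha
        · intro h
          exact hyQ ⟨_, h, rfl⟩
      · exact hy2 hxX hyX
    · exact ae_of_all _ fun y hxQ => absurd (hsub j hxQ) hxX
  have : NeZero d := ⟨by omega⟩
  obtain ⟨j, hj⟩ : ∃ j, μ (Subtype.val '' Q j) ≠ 0 := by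
    by_contra hc
    push Not at hc
    apply hXpos
    have : X = ⋃ j, Subtype.val '' Q j := by
      rw [← Set.image_iUnion, hQ.2.2.1]
      simp
    rw [this]
    exact measure_iUnion_null hc
  refine prod_false hj hj ?_
  have h3 := ae_all_iff.2 fun n => Van.pow (P := fun j => Subtype.val '' Q j) hv n j
  filter_upwards [h3, hpos] with p hp3 hpp h1 h2
  obtain ⟨k, hk⟩ := hpp (hsub _ h1) (hsub _ h2)
  have hlt := hk (d * k) (by nlinarith)
  rw [hp3 (d * k) h1] at hlt
  · exact hlt.false
  · intro h
    have hne : j ≠ j + ((d * k : ℕ) : ZMod d) + 1 := by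
      intro hc
      have : (1 : ZMod d) = 0 := by simpa using hc
      have h5 : ((1 : ℕ) : ZMod d) = 0 := by simpa using this
      rw [ZMod.natCast_eq_zero_iff] at h5
      exact hd1 (Nat.dvd_one.1 h5)
    obtain ⟨a, ha, hap⟩ := h2
    obtain ⟨b, hb, hbp⟩ := h
    have hab : a = b := Subtype.ext (hap.trans hbp.symm)
    subst hab
    exact Set.disjoint_left.1 (hQ.2.1 hne) ha hb

/-! ### Eigenvalues -/

lemma isEigenvalue_iff {μ : Measure Ω} [IsProbabilityMeasure μ] {K : Ω → Ω → ℝ} (hK : BK K)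
    (τ : ℂ) : IsEigenvalue μ K τ ↔ ∃ f : Lp ℂ 2 μ, f ≠ 0 ∧ op μ hK f = τ • f := by
  constructor
  · rintro ⟨f, hf, hf0, hfe⟩
    have hc : hf.toLp =ᵐ[μ] f := hf.coeFn_toLp
    refine ⟨hf.toLp, ?_, ?_⟩
    · intro h
      apply hf0
      rw [h] at hc
      exact hc.symm.trans (Lp.coeFn_zero _ _ _)
    · apply Lp.ext
      filter_upwards [op_spec hK hf.toLp, Lp.coeFn_smul τ hf.toLp, hc, hfe] with x h1 h2 h3 h4
      rw [h1, h2, app_congr hc, Pi.smul_apply, h3]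
      exact h4
  · rintro ⟨f, hf0, hfe⟩
    refine ⟨f, Lp.memLp f, ?_, ?_⟩
    · intro h
      apply hf0
      exact Lp.ext (h.trans (Lp.coeFn_zero _ _ _).symm)
    · have h1 := op_spec hK f
      rw [hfe] at h1
      filter_upwards [h1, Lp.coeFn_smul τ f] with x h1 h2
      rw [h2] at h1
      exact h1.symm

lemma le_specRad {μ : Measure Ω} [IsProbabilityMeasure μ] {K : Ω → Ω → ℝ} (hK : BK K)
    {τ : ℂ} (h : IsEigenvalue μ K τ) : ‖τ‖ ≤ specRad μ K := by
  refine le_csSup ⟨‖op μ hK‖, ?_⟩ (Or.inr ⟨τ, h, rfl⟩)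
  rintro r (rfl | ⟨σ, hσ, rfl⟩)
  · exact norm_nonneg _
  · obtain ⟨f, hf0, hf⟩ := (isEigenvalue_iff hK σ).1 hσ
    have h1 := (op μ hK).le_opNorm f
    rw [hf, norm_smul] at h1
    exact le_of_mul_le_mul_right h1 (norm_pos_iff.2 hf0)

lemma specRad_nonneg {μ : Measure Ω} [IsProbabilityMeasure μ] {K : Ω → Ω → ℝ} :
    0 ≤ specRad μ K := by
  apply Real.sSup_nonneg
  rintro r (rfl | ⟨σ, hσ, rfl⟩)
  · exact le_rfl
  · exact norm_nonneg _

lemma specRad_le {μ : Measure Ω} {K : Ω → Ω → ℝ} {b : ℝ} (hb : 0 ≤ b)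
    (h : ∀ τ, IsEigenvalue μ K τ → ‖τ‖ ≤ b) : specRad μ K ≤ b := by
  refine csSup_le ⟨0, Or.inl rfl⟩ ?_
  rintro r (rfl | ⟨σ, hσ, rfl⟩)
  · exact hb
  · exact h σ hσ

lemma op_kcomp {μ : Measure Ω} [IsProbabilityMeasure μ] {K L : Ω → Ω → ℝ} (hK : BK K) (hL : BK L)
    (hKL : BK (kcomp μ K L)) : op μ hKL = op μ hL * op μ hK := by
  ext1 f
  apply Lp.ext
  rw [ContinuousLinearMap.mul_apply]
  filter_upwards [op_spec hKL f, op_spec hL (op μ hK f)] with x h1 h2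
  rw [h1, h2, app_congr (op_spec hK f),
    app_kcomp hK hL ((Lp.memLp f).integrable (by norm_num))]

lemma op_kpow {μ : Measure Ω} [IsProbabilityMeasure μ] {K : Ω → Ω → ℝ} (hK : BK K) (n : ℕ)
    (hKn : BK (kpowAux μ K n)) : op μ hKn = (op μ hK) ^ (n + 1) := by
  induction n with
  | zero => rw [zero_add, pow_one]; rfl
  | succ n ih =>
    have h := op_kcomp (μ := μ) hK (hK.kpowAux n) hKn
    rw [ih (hK.kpowAux n)] at h
    rw [pow_succ]
    exact h

lemma exists_eigen_of_prod {E : Type*} [AddCommGroup E] [Module ℂ E] (T : Module.End ℂ E)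
    (s : Multiset ℂ) (f : E) (hf : f ≠ 0)
    (h : Polynomial.aeval T (s.map fun r => Polynomial.X - Polynomial.C r).prod f = 0) :
    ∃ r ∈ s, ∃ g : E, g ≠ 0 ∧ T g = r • g := by
  induction s using Multiset.induction_on generalizing f with
  | empty => simp at h; exact absurd h hf
  | cons r s ih =>
    rw [Multiset.map_cons, Multiset.prod_cons, mul_comm, map_mul, Module.End.mul_apply] at h
    by_cases hz : Polynomial.aeval T (Polynomial.X - Polynomial.C r) f = 0
    · refine ⟨r, Multiset.mem_cons_self r s, f, hf, ?_⟩
      simp [sub_eq_zero] at hz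
      exact hz
    · obtain ⟨r', hr', g, hg⟩ := ih _ hz h
      exact ⟨r', Multiset.mem_cons_of_mem hr', g, hg⟩

lemma exists_root_eigen {E : Type*} [AddCommGroup E] [Module ℂ E] (T : Module.End ℂ E)
    {n : ℕ} (hn : n ≠ 0) {f : E} (hf : f ≠ 0) {τ : ℂ} (h : (T ^ n) f = τ • f) :
    ∃ σ : ℂ, σ ^ n = τ ∧ ∃ g : E, g ≠ 0 ∧ T g = σ • g := by
  have hs := IsAlgClosed.splits (Polynomial.X ^ n - Polynomial.C τ : Polynomial ℂ)
  have hm : (Polynomial.X ^ n - Polynomial.C τ : Polynomial ℂ).Monic :=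
    Polynomial.monic_X_pow_sub_C τ hn
  have hp := hs.eq_prod_roots_of_monic hm
  obtain ⟨r, hr, g, hg⟩ := exists_eigen_of_prod T
    (Polynomial.X ^ n - Polynomial.C τ : Polynomial ℂ).roots f hf (by
      rw [← hp]
      simp [h])
  refine ⟨r, ?_, g, hg⟩
  have := (Polynomial.mem_roots'.1 hr).2
  simpa [sub_eq_zero] using this

lemma norm_le_of_pow_eigen {μ : Measure Ω} [IsProbabilityMeasure μ] {K : Ω → Ω → ℝ} (hK : BK K)
    {n : ℕ} {τ : ℂ} (h : IsEigenvalue μ (kpowAux μ K n) τ) : ‖τ‖ ≤ specRad μ K ^ (n + 1) := by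
  obtain ⟨f, hf0, hf⟩ := (isEigenvalue_iff (hK.kpowAux n) τ).1 h
  rw [op_kpow hK] at hf
  obtain ⟨σ, hσ, g, hg0, hg⟩ := exists_root_eigen ((op μ hK : Lp ℂ 2 μ →L[ℂ] Lp ℂ 2 μ) :
    Lp ℂ 2 μ →ₗ[ℂ] Lp ℂ 2 μ) (n := n + 1) (by omega) hf0 (τ := τ) (by
      rw [← hf, ← ContinuousLinearMap.toLinearMap_pow]
      rfl)
  have h1 : IsEigenvalue μ K σ := (isEigenvalue_iff hK σ).2 ⟨g, hg0, hg⟩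
  rw [← hσ, norm_pow]
  exact pow_le_pow_left₀ (norm_nonneg _) (le_specRad hK h1) _

/-! ### Existence of a nonzero eigenvalue -/

lemma exists_minor {μ : Measure Ω} [IsProbabilityMeasure μ] {G : Ω → Ω → ℝ} (hG : BK G)
    {X : Set Ω} (hX : MeasurableSet X) (hXpos : μ X ≠ 0) (hpos : EvPos μ G X) :
    ∃ n : ℕ, ∃ c : ℝ, 0 < c ∧
      (μ.prod μ) {p | p.1 ∈ X ∧ p.2 ∈ X ∧ kpowAux μ G n p.1 p.2 ≤ c} < μ X / 4 * (μ X / 4) := by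
  have hε : 0 < μ X / 4 * (μ X / 4) := by
    have : μ X / 4 ≠ 0 := by simp [ENNReal.div_eq_zero_iff, hXpos]
    exact pos_iff_ne_zero.2 (mul_ne_zero this this)
  have hX1 : MeasurableSet {p : Ω × Ω | p.1 ∈ X} := measurable_fst hX
  have hX2 : MeasurableSet {p : Ω × Ω | p.2 ∈ X} := measurable_snd hX
  have hms : ∀ n (c : ℝ), MeasurableSet
      {p : Ω × Ω | p.1 ∈ X ∧ p.2 ∈ X ∧ kpowAux μ G n p.1 p.2 ≤ c} := by
    intro n c
    have h3 : MeasurableSet {p : Ω × Ω | kpowAux μ G n p.1 p.2 ≤ c} :=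
      (hG.kpowAux (μ := μ) n).1 measurableSet_Iic
    exact hX1.inter (hX2.inter h3)
  have h1 : Tendsto (fun n => (μ.prod μ)
      {p : Ω × Ω | p.1 ∈ X ∧ p.2 ∈ X ∧ kpowAux μ G n p.1 p.2 ≤ 0}) atTop
      (𝓝 ((μ.prod μ) ∅)) := by
    refine tendsto_measure_of_ae_tendsto_indicator_of_isFiniteMeasure atTop MeasurableSet.empty
      (fun n => hms n 0) ?_
    filter_upwards [hpos] with p hp
    by_cases hpX : p.1 ∈ X ∧ p.2 ∈ X
    · obtain ⟨k, hk⟩ := hp hpX.1 hpX.2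
      filter_upwards [eventually_ge_atTop k] with n hn
      simp only [Set.mem_ofPred_eq, Set.mem_empty_iff_false, iff_false, not_and, not_le]
      exact fun _ _ => hk n hn
    · refine Eventually.of_forall fun n => ?_
      simp only [Set.mem_ofPred_eq, Set.mem_empty_iff_false, iff_false]
      tauto
  rw [measure_empty] at h1
  obtain ⟨n, hn⟩ := (h1.eventually (gt_mem_nhds hε)).exists
  refine ⟨n, ?_⟩
  have h2 : Tendsto (fun k : ℕ => (μ.prod μ)
      {p : Ω × Ω | p.1 ∈ X ∧ p.2 ∈ X ∧ kpowAux μ G n p.1 p.2 ≤ 1 / ((k : ℝ) + 1)}) atTop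
      (𝓝 ((μ.prod μ) {p : Ω × Ω | p.1 ∈ X ∧ p.2 ∈ X ∧ kpowAux μ G n p.1 p.2 ≤ 0})) := by
    refine tendsto_measure_of_ae_tendsto_indicator_of_isFiniteMeasure atTop (hms n 0)
      (fun k => hms n _) (ae_of_all _ fun p => ?_)
    by_cases hp0 : kpowAux μ G n p.1 p.2 ≤ 0
    · refine Eventually.of_forall fun k => ?_
      have : kpowAux μ G n p.1 p.2 ≤ 1 / ((k : ℝ) + 1) := hp0.trans (by positivity)
      simp only [Set.mem_ofPred_eq, hp0, this]
    · filter_upwards [tendsto_one_div_add_atTop_nhds_zero_nat.eventually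
        (gt_mem_nhds (not_le.1 hp0))] with k hk
      simp only [Set.mem_ofPred_eq, hp0, not_le.2 hk]
  obtain ⟨k, hk⟩ := (h2.eventually (gt_mem_nhds hn)).exists
  exact ⟨1 / ((k : ℝ) + 1), by positivity, hk⟩

lemma exists_minor_set {μ : Measure Ω} [IsProbabilityMeasure μ] {K : Ω → Ω → ℝ} (hK : BK K)
    (h0 : ∀ x y, 0 ≤ K x y)
    {X : Set Ω} (hX : MeasurableSet X) (hXpos : μ X ≠ 0) {c : ℝ} (hc : 0 < c)
    (h : (μ.prod μ) {p | p.1 ∈ X ∧ p.2 ∈ X ∧ K p.1 p.2 ≤ c} < μ X / 4 * (μ X / 4)) :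
    ∃ A : Set Ω, MeasurableSet A ∧ μ A ≠ 0 ∧ ∃ δ : ℝ, 0 < δ ∧
      ∀ x ∈ A, δ ≤ ∫ y in A, K y x ∂μ := by
  set S : Set (Ω × Ω) := {p | p.1 ∈ X ∧ p.2 ∈ X ∧ K p.1 p.2 ≤ c} with hS
  have hSm : MeasurableSet S := by
    have h1 : MeasurableSet {p : Ω × Ω | p.1 ∈ X} := measurable_fst hX
    have h2 : MeasurableSet {p : Ω × Ω | p.2 ∈ X} := measurable_snd hX
    have h3 : MeasurableSet {p : Ω × Ω | K p.1 p.2 ≤ c} := hK.1 measurableSet_Iic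
    exact h1.inter (h2.inter h3)
  let b : Ω → ℝ≥0∞ := fun x => μ ((fun y => (y, x)) ⁻¹' S)
  have hbm : Measurable b := measurable_measure_prodMk_right hSm
  have hbint : ∫⁻ x, b x ∂μ = (μ.prod μ) S := (Measure.prod_apply_symm hSm).symm
  let N : Set Ω := {x | μ X / 4 ≤ b x}
  have hN : MeasurableSet N := measurableSet_le measurable_const hbm
  have hN1 : μ N < μ X / 4 := by
    have h1 := mul_meas_ge_le_lintegral (μ := μ) hbm (μ X / 4)
    rw [hbint] at h1
    exact lt_of_mul_lt_mul_left' (h1.trans_lt h)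
  have hmX : 0 < μ.real X := ENNReal.toReal_pos hXpos (measure_ne_top _ _)
  have h4 : (μ X / 4).toReal = μ.real X / 4 := by
    rw [ENNReal.toReal_div]; rfl
  have h4t : μ X / 4 ≠ ⊤ := (ENNReal.div_lt_top (measure_ne_top _ _) (by norm_num)).ne
  have hN2 : μ.real N < μ.real X / 4 := by
    rw [← h4]
    exact (ENNReal.toReal_lt_toReal (measure_ne_top _ _) h4t).2 hN1
  have key : ∀ x ∈ X \ N, μ.real X / 2 ≤ μ.real {y | y ∈ X \ N ∧ c < K y x} := by
    intro x hx
    have hb1 : b x < μ X / 4 := not_le.1 hx.2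
    have hb2 : μ.real ((fun y => (y, x)) ⁻¹' S) < μ.real X / 4 := by
      rw [← h4]
      exact (ENNReal.toReal_lt_toReal (measure_ne_top _ _) h4t).2 hb1
    have hcov : X ⊆ (N ∪ (fun y => (y, x)) ⁻¹' S) ∪ {y | y ∈ X \ N ∧ c < K y x} := by
      intro y hy
      by_cases hyN : y ∈ N
      · exact Or.inl (Or.inl hyN)
      · by_cases hyc : K y x ≤ c
        · exact Or.inl (Or.inr ⟨hy, hx.1, hyc⟩)
        · exact Or.inr ⟨⟨hy, hyN⟩, not_le.1 hyc⟩
    have h5 := (measureReal_mono (μ := μ) hcov).trans (measureReal_union_le _ _)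
    have h6 := measureReal_union_le (μ := μ) N ((fun y => (y, x)) ⁻¹' S)
    linarith
  have hA : MeasurableSet (X \ N) := hX.diff hN
  refine ⟨X \ N, hA, ?_, c * (μ.real X / 2), by positivity, ?_⟩
  · intro h7
    have h8 : μ X ≤ μ N := by
      have h9 : X ⊆ (X \ N) ∪ N := fun y hy => by
        by_cases hyN : y ∈ N
        · exact Or.inr hyN
        · exact Or.inl ⟨hy, hyN⟩
      have := (measure_mono (μ := μ) h9).trans (measure_union_le _ _)
      rwa [h7, zero_add] at this
    have h10 : μ.real X ≤ μ.real N := ENNReal.toReal_mono (measure_ne_top _ _) h8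
    linarith
  · intro x hx
    have hgm : MeasurableSet {y | y ∈ X \ N ∧ c < K y x} :=
      hA.inter ((hK.meas_left x) measurableSet_Ioi)
    have hInt : Integrable (fun y => K y x) μ := hK.transpose.integrable_right x
    calc c * (μ.real X / 2) ≤ c * μ.real {y | y ∈ X \ N ∧ c < K y x} :=
          mul_le_mul_of_nonneg_left (key x hx) hc.le
      _ = ∫ y in {y | y ∈ X \ N ∧ c < K y x}, c ∂μ := by
          rw [setIntegral_const, smul_eq_mul, mul_comm]
      _ ≤ ∫ y in {y | y ∈ X \ N ∧ c < K y x}, K y x ∂μ :=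
          setIntegral_mono_on (by simp) hInt.integrableOn hgm
            fun y hy => hy.2.le
      _ ≤ ∫ y in X \ N, K y x ∂μ :=
          setIntegral_mono_set hInt.integrableOn (ae_of_all _ fun y => h0 y x)
            (ae_of_all _ fun y hy => hy.1)

lemma iterate_lower {μ : Measure Ω} [IsProbabilityMeasure μ] {K : Ω → Ω → ℝ} (hK : BK K)
    (h0 : ∀ x y, 0 ≤ K x y) {A : Set Ω} (hA : MeasurableSet A) {δ : ℝ} (hδ : 0 < δ)
    (h : ∀ x ∈ A, δ ≤ ∫ y in A, K y x ∂μ) (g : Lp ℂ 2 μ)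
    (hg : g =ᵐ[μ] A.indicator (fun _ => (1 : ℂ))) (k : ℕ) :
    ∃ u : Ω → ℝ, Integrable u μ ∧ (∀ x, 0 ≤ u x) ∧ (∀ x ∈ A, δ ^ k ≤ u x) ∧
      ((op μ hK) ^ k) g =ᵐ[μ] fun x => (u x : ℂ) := by
  induction k with
  | zero =>
    refine ⟨A.indicator (fun _ => 1), (integrable_const _).indicator hA,
      fun x => Set.indicator_nonneg (fun _ _ => zero_le_one) x, ?_, ?_⟩
    · intro x hx
      simp [hx]
    · rw [pow_zero]
      refine hg.trans (ae_of_all _ fun x => ?_)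
      by_cases hx : x ∈ A <;> simp [hx]
  | succ k ih =>
    obtain ⟨u, hui, hu0, huA, hue⟩ := ih
    have he : ((op μ hK) ^ (k + 1)) g =ᵐ[μ] fun x => ((∫ y, u y * K y x ∂μ : ℝ) : ℂ) := by
      rw [pow_succ', ContinuousLinearMap.mul_apply]
      refine (op_spec hK _).trans ?_
      rw [app_congr hue]
      exact ae_of_all _ fun x => app_ofReal u x
    have hum : ∀ x, Integrable (fun y => u y * K y x) μ := by
      intro x
      obtain ⟨C, hC⟩ := hK.2
      exact hui.mul_bdd (c := C) (hK.meas_left x).aestronglyMeasurable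
        (ae_of_all _ fun y => hC y x)
    refine ⟨fun x => ∫ y, u y * K y x ∂μ, ?_, ?_, ?_, he⟩
    · have h1 : Integrable (((op μ hK) ^ (k + 1)) g) μ := (Lp.memLp _).integrable (by norm_num)
      have h2 := (h1.congr he).re
      simpa using h2
    · exact fun x => integral_nonneg fun y => mul_nonneg (hu0 y) (h0 y x)
    · intro x hx
      have hInt : Integrable (fun y => K y x) μ := hK.transpose.integrable_right x
      calc δ ^ (k + 1) = δ ^ k * δ := pow_succ _ _
        _ ≤ δ ^ k * ∫ y in A, K y x ∂μ := mul_le_mul_of_nonneg_left (h x hx) (by positivity)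
        _ = ∫ y in A, δ ^ k * K y x ∂μ := (integral_const_mul _ _).symm
        _ ≤ ∫ y in A, u y * K y x ∂μ :=
            setIntegral_mono_on (hInt.const_mul _).integrableOn (hum x).integrableOn hA
              fun y hy => mul_le_mul_of_nonneg_right (huA y hy) (h0 y x)
        _ ≤ ∫ y, u y * K y x ∂μ :=
            setIntegral_le_integral (hum x) (ae_of_all _ fun y => mul_nonneg (hu0 y) (h0 y x))

lemma spectrum_of_lower {E : Type*} [NormedAddCommGroup E] [NormedSpace ℂ E] [CompleteSpace E]
    (S : E →L[ℂ] E) (hS : IsCompactOperator S) (g : E) (hg : g ≠ 0) {δ : ℝ} (hδ : 0 < δ)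
    (h : ∀ k : ℕ, δ ^ k * ‖g‖ ≤ ‖(S ^ k) g‖) : ∃ τ : ℂ, τ ≠ 0 ∧ ∃ f, f ≠ 0 ∧ S f = τ • f := by
  have : Nontrivial E := ⟨g, 0, hg⟩
  have hn : ∀ k : ℕ, δ ^ k ≤ ‖S ^ k‖ := fun k =>
    le_of_mul_le_mul_right ((h k).trans ((S ^ k).le_opNorm g)) (norm_pos_iff.2 hg)
  have hge : ENNReal.ofReal δ ≤ spectralRadius ℂ S := by
    refine ge_of_tendsto (spectrum.pow_nnnorm_pow_one_div_tendsto_nhds_spectralRadius S) ?_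
    filter_upwards [eventually_gt_atTop 0] with k hk
    have h1 : (ENNReal.ofReal δ) ^ k ≤ (‖S ^ k‖₊ : ℝ≥0∞) := by
      rw [← ENNReal.ofReal_pow hδ.le]
      refine (ENNReal.ofReal_le_ofReal (hn k)).trans (le_of_eq ?_)
      rw [ofReal_norm]; rfl
    have h2 := ENNReal.rpow_le_rpow h1 (z := 1 / (k : ℝ)) (by positivity)
    rw [← ENNReal.rpow_natCast, ← ENNReal.rpow_mul] at h2
    rwa [mul_one_div_cancel (by positivity), ENNReal.rpow_one] at h2
  obtain ⟨z, hz, hzr⟩ := spectrum.exists_nnnorm_eq_spectralRadius S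
  have hz0 : z ≠ 0 := by
    rintro rfl
    rw [← hzr] at hge
    simp at hge
    linarith
  have h3 := (hS.hasEigenvalue_iff_mem_spectrum hz0).2 hz
  obtain ⟨f, hf⟩ := h3.exists_hasEigenvector
  exact ⟨z, hz0, f, hf.2, hf.apply_eq_smul⟩

lemma specRad_pos {μ : Measure Ω} [IsProbabilityMeasure μ] {G : Ω → Ω → ℝ} (hG : BK G)
    (h0 : ∀ x y, 0 ≤ G x y)
    {X : Set Ω} (hX : MeasurableSet X) (hXpos : μ X ≠ 0) (hpos : EvPos μ G X) :
    ∃ n : ℕ, ∃ τ : ℂ, τ ≠ 0 ∧ IsEigenvalue μ (kpowAux μ G n) τ := by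
  obtain ⟨n, c, hc, hlt⟩ := exists_minor hG hX hXpos hpos
  have hK := hG.kpowAux (μ := μ) n
  have hK0 := fun x y => kpowAux_nonneg (μ := μ) h0 n x y
  obtain ⟨A, hA, hApos, δ, hδ, hAδ⟩ := exists_minor_set hK hK0 hX hXpos hc hlt
  obtain ⟨g, hg⟩ := exists_indicator (μ := μ) hA (1 : ℂ)
  have hg0 : g ≠ 0 := by
    rintro rfl
    apply hApos
    have h1 := (Lp.coeFn_zero ℂ 2 μ).symm.trans hg
    refine measure_mono_null ?_ (ae_iff.1 h1)
    intro x hx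
    simp [hx]
  refine ⟨n, ?_⟩
  obtain ⟨τ, hτ, f, hf⟩ := spectrum_of_lower (op μ hK) (op_compact hK) g hg0 hδ (by
    intro k
    obtain ⟨u, -, hu0, huA, hue⟩ := iterate_lower hK hK0 hA hδ hAδ g hg k
    have h1 : ‖((δ ^ k : ℝ) : ℂ) • g‖ ≤ ‖((op μ hK) ^ k) g‖ := by
      refine Lp.norm_le_norm_of_ae_le ?_
      filter_upwards [hue, hg, Lp.coeFn_smul ((δ ^ k : ℝ) : ℂ) g] with x h1 h2 h3
      rw [h1, h3, Pi.smul_apply, h2, Complex.norm_real, Real.norm_of_nonneg (hu0 x)]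
      by_cases hx : x ∈ A
      · simpa [hx, abs_of_pos hδ] using huA x hx
      · simpa [hx] using hu0 x
    rwa [norm_smul, Complex.norm_real, Real.norm_of_nonneg (by positivity)] at h1)
  exact ⟨τ, hτ, (isEigenvalue_iff hK τ).2 ⟨f, hf⟩⟩

/-! ### Restriction to the periodic classes -/

lemma col_zero {μ : Measure Ω} [IsProbabilityMeasure μ] {K : Ω → Ω → ℝ} {d : ℕ}
    {P : ZMod d → Set Ω} (hd : Pairwise (Function.onFun Disjoint P)) (hu : (⋃ j, P j) = Set.univ)
    (s : ZMod d) (hv : ∀ j, Van μ K (P j) (P (j + s))) :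
    ∀ᵐ x ∂μ, ∀ᵐ y ∂μ, ∀ j, x ∈ P (j + s) → y ∉ P j → K y x = 0 := by
  have hc : Countable (ZMod d) := by
    cases d
    · exact inferInstanceAs (Countable ℤ)
    · exact inferInstanceAs (Countable (Fin _))
  have h1 : ∀ᵐ p ∂(μ.prod μ), ∀ j, p.1 ∈ P j → p.2 ∉ P (j + s) → K p.1 p.2 = 0 :=
    ae_all_iff.2 hv
  have h2 := Measure.ae_ae_of_ae_prod (ae_swap h1)
  filter_upwards [h2] with x hx
  filter_upwards [hx] with y hy j hxj hyj
  have : y ∈ ⋃ j, P j := by rw [hu]; trivial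
  obtain ⟨k, hk⟩ := Set.mem_iUnion.1 this
  refine hy k hk fun hxk => ?_
  have hne : k + s ≠ j + s := by
    intro h
    rw [add_right_cancel h] at hk
    exact hyj hk
  exact Set.disjoint_left.1 (hd hne) hxk hxj

lemma integral_subMeasure {E : Type*} [NormedAddCommGroup E] [NormedSpace ℝ E]
    {μ : Measure Ω} {X : Set Ω} (hX : MeasurableSet X) (h : Ω → E) :
    ∫ b, h (b : Ω) ∂(subMeasure μ X) = ((μ X).toReal)⁻¹ • ∫ x in X, h x ∂μ := by
  rw [subMeasure, integral_smul_measure, integral_subtype_comap hX, ENNReal.toReal_inv]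

lemma memLp_sub {E : Type*} [NormedAddCommGroup E] {μ : Measure Ω} {X : Set Ω}
    (hX : MeasurableSet X) (hpos : μ X ≠ 0) {v : Ω → E} (hv : MemLp v 2 μ) :
    MemLp (fun a : X => v a) 2 (subMeasure μ X) := by
  have h1 := hv.restrict X
  rw [← map_comap_subtype_coe hX,
    (MeasurableEmbedding.subtype_coe hX).memLp_map_measure_iff] at h1
  exact h1.smul_measure (ENNReal.inv_ne_top.2 hpos)

lemma memLp_ext {E : Type*} [NormedAddCommGroup E] {μ : Measure Ω} [IsProbabilityMeasure μ]
    {X : Set Ω} (hX : MeasurableSet X) (hpos : μ X ≠ 0) {f : X → E}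
    (hf : MemLp f 2 (subMeasure μ X)) {F : Ω → E} (hF : ∀ a : X, F a = f a)
    (hF0 : ∀ x ∉ X, F x = 0) : MemLp F 2 μ := by
  have h0 : MemLp f 2 (Measure.comap Subtype.val μ) := by
    have h := hf.smul_measure (c := μ X) (measure_ne_top μ X)
    rwa [subMeasure, smul_smul, ENNReal.mul_inv_cancel hpos (measure_ne_top μ X), one_smul] at h
  have h1 : MemLp F 2 (μ.restrict X) := by
    rw [← map_comap_subtype_coe hX,
      (MeasurableEmbedding.subtype_coe hX).memLp_map_measure_iff]
    have : F ∘ Subtype.val = f := funext hF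
    rwa [this]
  have h2 : X.indicator F = F := by
    ext x
    by_cases hx : x ∈ X
    · simp [hx]
    · simp [hx, hF0 x hx]
  rw [← h2]
  exact (memLp_indicator_iff_restrict hX).2 h1

lemma pow_eig {μ : Measure Ω} [IsProbabilityMeasure μ] {K : Ω → Ω → ℝ} (hK : BK K)
    {f : Ω → ℂ} (hf : Integrable f μ) {ρ : ℂ} (h : ∀ᵐ x ∂μ, app μ K f x = ρ * f x) (n : ℕ) :
    ∀ᵐ x ∂μ, app μ (kpowAux μ K n) f x = ρ ^ (n + 1) * f x := by
  induction n with
  | zero => simpa [kpowAux] using h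
  | succ n ih =>
    rw [kpowAux_succ, app_kcomp hK (hK.kpowAux n) hf]
    have h1 : app μ K f =ᵐ[μ] fun x => ρ * f x := h
    rw [app_congr h1]
    filter_upwards [ih] with x hx
    have : app μ (kpowAux μ K n) (fun x => ρ * f x) x = ρ * app μ (kpowAux μ K n) f x := by
      simp only [app, mul_assoc]
      rw [integral_const_mul]
    rw [this, hx]
    ring

lemma eig_part {μ : Measure Ω} [IsProbabilityMeasure μ] {K : Ω → Ω → ℝ} (hK : BK K) {D : ℕ}
    (hD : D ≠ 0) {P : ZMod D → Set Ω} (hm : ∀ j, MeasurableSet (P j))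
    (hd : Pairwise (Function.onFun Disjoint P)) (hu : (⋃ j, P j) = Set.univ)
    (hv : ∀ j, Van μ K (P j) (P (j + 1))) {v : Ω → ℝ} (hv2 : MemLp v 2 μ)
    (hv0 : ¬(v =ᵐ[μ] 0)) {ρ : ℝ} (hρ : ρ ≠ 0)
    (he : ∀ᵐ x ∂μ, ∫ y, v y * K y x ∂μ = ρ * v x) (i : ZMod D) :
    μ (P i) ≠ 0 ∧ ¬((fun a : ↥(P i) => v ↑a) =ᵐ[subMeasure μ (P i)] 0) ∧
        MemLp (fun a : ↥(P i) => v ↑a) 2 (subMeasure μ (P i)) ∧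
        ∀ᵐ a ∂(subMeasure μ (P i)),
          ∫ b, v ↑b * subKernel (dpow μ K D) (P i) b a ∂(subMeasure μ (P i))
            = (ρ ^ D / (μ (P i)).toReal) * v ↑a := by
  have hne : NeZero D := ⟨hD⟩
  have hnz : ¬ ∀ᵐ x ∂μ, x ∈ P i → v x = 0 := by
    intro h
    have hstep : ∀ n : ℕ, ∀ᵐ x ∂μ, x ∈ P (i + n) → v x = 0 := by
      intro n
      induction n with
      | zero => simpa using h
      | succ n ih =>
        filter_upwards [he, col_zero hd hu 1 hv] with x hx hc hxp
        have hz : ∫ y, v y * K y x ∂μ = 0 := by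
          apply integral_eq_zero_of_ae
          filter_upwards [hc, ih] with y hy hy2
          by_cases hyp : y ∈ P (i + n)
          · simp [hy2 hyp]
          · rw [hy (i + n) (by rw [add_assoc]; exact_mod_cast hxp) hyp]; simp
        rw [hz] at hx
        exact (mul_eq_zero.1 hx.symm).resolve_left hρ
    apply hv0
    filter_upwards [ae_all_iff.2 hstep] with x hx
    have : x ∈ ⋃ j, P j := by rw [hu]; trivial
    obtain ⟨k, hk⟩ := Set.mem_iUnion.1 this
    refine hx (k - i).val ?_
    rw [ZMod.natCast_zmod_val, add_sub_cancel]
    exact hk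
  have hpos : μ (P i) ≠ 0 := by
    intro h
    apply hnz
    filter_upwards [measure_eq_zero_iff_ae_notMem.1 h] with x hx hx2
    exact absurd hx2 hx
  refine ⟨hpos, ?_, memLp_sub (hm i) hpos hv2, ?_⟩
  · intro h
    exact hnz ((ae_subMeasure_iff (hm i)).1 h)
  · rw [ae_subMeasure_iff (hm i)]
    have hInt : Integrable v μ := hv2.integrable (by norm_num)
    have hp := pow_eig hK (f := fun x => (v x : ℂ)) hInt.ofReal (ρ := (ρ : ℂ)) (by
      filter_upwards [he] with x hx
      rw [app_ofReal, hx]; simp) (D - 1)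
    have hG : ∀ j, Van μ (dpow μ K D) (P j) (P (j + 0)) := by
      intro j
      have h := Van.pow hv (D - 1) j
      have e : j + ((D - 1 : ℕ) : ZMod D) + 1 = j + 0 := by
        have : ((D - 1 : ℕ) : ZMod D) + 1 = ((D - 1 + 1 : ℕ) : ZMod D) := by push_cast; rfl
        rw [add_assoc, this, Nat.sub_add_cancel (Nat.one_le_iff_ne_zero.2 hD)]
        simp
      rwa [e] at h
    filter_upwards [hp, col_zero hd hu 0 hG] with x hx hc hxi
    rw [app_ofReal, Nat.sub_add_cancel (Nat.one_le_iff_ne_zero.2 hD)] at hx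
    have hx' : ∫ y, v y * dpow μ K D y x ∂μ = ρ ^ D * v x := by exact_mod_cast hx
    have h3 := integral_subMeasure (μ := μ) (hm i) (fun y => v y * dpow μ K D y x)
    have h4 : ∫ y in P i, v y * dpow μ K D y x ∂μ = ∫ y, v y * dpow μ K D y x ∂μ := by
      apply setIntegral_eq_integral_of_ae_compl_eq_zero
      filter_upwards [hc] with y hy hyi
      rw [hy i (by simpa using hxi) hyi, mul_zero]
    simp only [subKernel]
    rw [h3, h4, hx', smul_eq_mul]
    ring

lemma specRad_sub {μ : Measure Ω} [IsProbabilityMeasure μ] {K : Ω → Ω → ℝ} (hK : BK K) {D : ℕ}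
    (hD : D ≠ 0) {X : Set Ω} (hX : MeasurableSet X) (hpos : μ X ≠ 0)
    (hvan : Van μ (dpow μ K D) X X) {v : Ω → ℝ}
    (h0 : ¬((fun a : ↥X => v ↑a) =ᵐ[subMeasure μ X] 0))
    (h2 : MemLp (fun a : ↥X => v ↑a) 2 (subMeasure μ X))
    (he : ∀ᵐ a ∂(subMeasure μ X), ∫ b, v ↑b * subKernel (dpow μ K D) X b a ∂(subMeasure μ X)
            = (specRad μ K ^ D / (μ X).toReal) * v ↑a) :
    specRad (subMeasure μ X) (subKernel (dpow μ K D) X) = specRad μ K ^ D / (μ X).toReal := by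
  have := subMeasure_isProb hX hpos
  have hm : 0 < (μ X).toReal := ENNReal.toReal_pos hpos (measure_ne_top μ X)
  have hb : 0 ≤ specRad μ K ^ D / (μ X).toReal :=
    div_nonneg (pow_nonneg specRad_nonneg _) hm.le
  have hG := hK.dpow (μ := μ) D
  have hS : BK (subKernel (dpow μ K D) X) := by
    refine ⟨hG.1.comp ((measurable_subtype_coe.comp measurable_fst).prodMk
      (measurable_subtype_coe.comp measurable_snd)), ?_⟩
    obtain ⟨C, hC⟩ := hG.2
    exact ⟨C, fun x y => hC _ _⟩
  apply le_antisymm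
  · refine specRad_le hb fun τ hτ => ?_
    obtain ⟨f, hf2, hf0, hfe⟩ := hτ
    classical
    let F : Ω → ℂ := fun x => if h : x ∈ X then f ⟨x, h⟩ else 0
    have hF : ∀ a : X, F a = f a := fun a => by simp [F]
    have hF0 : ∀ x ∉ X, F x = 0 := fun x hx => by simp [F, hx]
    have hInt : ∀ x, ∫ y, F y * (dpow μ K D y x : ℂ) ∂μ
        = ∫ y in X, F y * (dpow μ K D y x : ℂ) ∂μ := by
      intro x
      rw [setIntegral_eq_integral_of_forall_compl_eq_zero]
      intro y hy
      rw [hF0 y hy, zero_mul]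
    have hev : IsEigenvalue μ (kpowAux μ K (D - 1)) (τ * ((μ X).toReal : ℂ)) := by
      refine ⟨F, memLp_ext hX hpos hf2 hF hF0, ?_, ?_⟩
      · intro h
        apply hf0
        apply (ae_subMeasure_iff hX).2
        filter_upwards [h] with x hx hxX
        rw [← hF ⟨x, hxX⟩]
        exact hx
      · have hfe' := (ae_subMeasure_iff hX).1 hfe
        have hc := Measure.ae_ae_of_ae_prod (ae_swap hvan)
        filter_upwards [hfe', hc] with x hx hcx
        change ∫ y, F y * (dpow μ K D y x : ℂ) ∂μ = _
        by_cases hxX : x ∈ X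
        · have h3 := integral_subMeasure (μ := μ) hX (fun y => F y * (dpow μ K D y x : ℂ))
          have h4 := hx hxX
          simp only [hF] at h3
          simp only [subKernel] at h4
          rw [h3] at h4
          rw [hInt, hF ⟨x, hxX⟩, mul_right_comm, ← h4, Complex.real_smul, mul_comm, ← mul_assoc,
            ← Complex.ofReal_mul, mul_inv_cancel₀ hm.ne']
          simp
        · rw [hF0 x hxX, mul_zero]
          apply integral_eq_zero_of_ae
          filter_upwards [hcx] with y hy
          by_cases hyX : y ∈ X
          · have : dpow μ K D y x = 0 := hy hyX hxX
            simp [this]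
          · simp [hF0 y hyX]
    have := norm_le_of_pow_eigen hK hev
    rw [Nat.sub_add_cancel (Nat.one_le_iff_ne_zero.2 hD), norm_mul, Complex.norm_real,
      Real.norm_of_nonneg hm.le] at this
    rwa [le_div_iff₀ hm]
  · have hev : IsEigenvalue (subMeasure μ X) (subKernel (dpow μ K D) X)
        ((specRad μ K ^ D / (μ X).toReal : ℝ) : ℂ) := by
      refine ⟨fun a => ((v a : ℝ) : ℂ), h2.ofReal, ?_, ?_⟩
      · intro h
        apply h0
        filter_upwards [h] with a ha
        simpa using ha
      · filter_upwards [he] with a ha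
        have := app_ofReal (μ := subMeasure μ X) (K := subKernel (dpow μ K D) X)
          (fun b => v b) a
        rw [app] at this
        rw [this, ha]
        push_cast
        rfl
    have := le_specRad hS hev
    rwa [Complex.norm_real, Real.norm_of_nonneg hb] at this

lemma periph_ne_zero {μ : Measure Ω} [IsProbabilityMeasure μ] {Γ : Ω → Ω → ℝ} (hΓ : BK Γ)
    (hconn : StronglyConnectedIn μ Γ Set.univ)
    (P : ZMod 0 → Set Ω) (hP : IsPeriodicityWitness μ Γ P) : periphMult μ Γ ≠ 0 := by
  have hΓ0 : ∀ᵐ p ∂(μ.prod μ), Γ p.1 p.2 = 0 := by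
    let Q : ℤ → Set Ω := P
    have hv : ∀ j : ℤ, Van μ Γ (Q j) (Q (j + 1)) := fun j => hP.van j
    have hm : ∀ j : ℤ, MeasurableSet (Q j) := hP.1
    have hd : Pairwise (Function.onFun Disjoint Q) := hP.2.1
    have hu : (⋃ j : ℤ, Q j) = Set.univ := hP.2.2.1
    have hex : ∃ i : ℤ, μ (Q i) ≠ 0 := by
      by_contra hc
      push Not at hc
      have := measure_iUnion_null hc
      rw [hu] at this
      simp at this
    obtain ⟨i, hi⟩ := hex
    let U : ℤ → Set Ω := fun m => ⋃ j : ℤ, ⋃ (_ : m ≤ j), Q j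
    have hUm : ∀ m, MeasurableSet (U m) := fun m =>
      MeasurableSet.iUnion fun j => MeasurableSet.iUnion fun _ => hm j
    have hUv : ∀ m, μ (U m) = 0 ∨ μ (U m)ᶜ = 0 := by
      intro m
      by_contra hc
      push Not at hc
      have h1 := hconn.2.2 (U m) (U m)ᶜ (hUm m) (hUm m).compl (Set.union_compl_self _)
        disjoint_compl_right (pos_iff_ne_zero.2 hc.1) (pos_iff_ne_zero.2 hc.2)
      rw [setint_zero hΓ] at h1
      · exact lt_irrefl _ h1
      · filter_upwards [ae_all_iff.2 hv] with p hp h1 h2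
        simp only [U, Set.mem_iUnion] at h1
        obtain ⟨j, hj, hpj⟩ := h1
        refine hp j hpj fun h3 => h2 ?_
        simp only [U, Set.mem_iUnion]
        exact ⟨j + 1, by omega, h3⟩
    have hA : μ (U (i + 1)) = 0 := by
      refine (hUv (i + 1)).resolve_right fun h => hi (measure_mono_null ?_ h)
      intro x hx hxU
      simp only [U, Set.mem_iUnion] at hxU
      obtain ⟨j, hj, hxj⟩ := hxU
      exact Set.disjoint_left.1 (hd (show i ≠ j by omega)) hx hxj
    have hB : μ (U i)ᶜ = 0 := by
      refine (hUv i).resolve_left fun h => hi (measure_mono_null ?_ h)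
      intro x hx
      simp only [U, Set.mem_iUnion]
      exact ⟨i, le_rfl, hx⟩
    have hfull : ∀ᵐ x ∂μ, x ∈ Q i ∧ x ∉ Q (i + 1) := by
      filter_upwards [measure_eq_zero_iff_ae_notMem.1 hA, measure_eq_zero_iff_ae_notMem.1 hB]
        with x h1 h2
      rw [Set.notMem_compl_iff] at h2
      simp only [U, Set.mem_iUnion, not_exists] at h1 h2
      obtain ⟨j, hj, hxj⟩ := h2
      have : j = i := by
        by_contra hne
        exact h1 j (by omega) hxj
      subst this
      exact ⟨hxj, h1 (j + 1) le_rfl⟩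
    filter_upwards [hv i, ae_fst hfull, ae_snd hfull] with p hp h1 h2
    exact hp h1.1 h2.2
  have hzero : ∀ f : Ω → ℂ, ∀ᵐ x ∂μ, ∫ y, f y * (Γ y x : ℂ) ∂μ = 0 := by
    intro f
    filter_upwards [Measure.ae_ae_of_ae_prod (ae_swap hΓ0)] with x hx
    apply integral_eq_zero_of_ae
    filter_upwards [hx] with y hy
    have : Γ y x = 0 := hy
    simp [this]
  have heig : ∀ τ, IsEigenvalue μ Γ τ ↔ τ = 0 := by
    intro τ
    constructor
    · rintro ⟨f, -, hf0, hfe⟩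
      by_contra hτ
      apply hf0
      filter_upwards [hfe, hzero f] with x h1 h2
      rw [h2] at h1
      exact (mul_eq_zero.1 h1.symm).resolve_left hτ
    · rintro rfl
      refine ⟨fun _ => 1, memLp_const 1, ?_, ?_⟩
      · intro h
        have h' : ∀ᵐ x ∂μ, False := by
          filter_upwards [h] with x hx
          simp at hx
        rw [Filter.eventually_false_iff_eq_bot, ae_eq_bot] at h'
        exact IsProbabilityMeasure.ne_zero μ h'
      · filter_upwards [hzero fun _ => 1] with x hx
        rw [hx]; simp
  have hs : specRad μ Γ = 0 := by
    apply le_antisymm _ specRad_nonneg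
    apply specRad_le le_rfl
    intro τ hτ
    rw [(heig τ).1 hτ]; simp
  have : {τ : ℂ | IsEigenvalue μ Γ τ ∧ ‖τ‖ = specRad μ Γ} = {0} := by
    ext τ
    simp only [Set.mem_setOf_eq, heig, hs, norm_eq_zero, and_self, Set.mem_singleton_iff]
  rw [periphMult, this]
  simp

/-- For a strongly connected digraphon `Γ` of peripheral multiplicity `D`
with cyclic classes `P₀,…,P_{D-1}`, the strong-component decomposition of `Γ^D` consists of
an empty fragmented set and exactly the components `P i`; each restricted digraphon
`(Γ^D)↾(P i × P i)` (with the normalized measure) is aperiodic, has spectral radius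
`ρ(Γ)^D / μ(P i)`, and the restrictions of `v_L` and `v_R` are its left and right
eigenfunctions for this eigenvalue. -/
theorem power_of_periodic_digraphon
    {Ω : Type*} [MeasurableSpace Ω] (μ : Measure Ω) [IsProbabilityMeasure μ]
    (Γ : Ω → Ω → ℝ) (hΓ : IsDigraphon Γ)
    (hconn : StronglyConnectedIn μ Γ Set.univ)
    (D : ℕ) (hD : periphMult μ Γ = D)
    (P : ZMod D → Set Ω) (hP : IsPeriodicityWitness μ Γ P)
    (hPreach : ∀ i j : ZMod D, ∀ᵐ p : Ω × Ω ∂(μ.prod μ), p.1 ∈ P i → p.2 ∈ P j →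
      EvPeriodic D ((j.val : ℤ) - (i.val : ℤ)) (reachSeq μ Γ p.1 p.2))
    (vL vR : Ω → ℝ)
    (hvL2 : MemLp vL 2 μ) (hvL0 : ¬(vL =ᵐ[μ] 0))
    (hvLeig : ∀ᵐ x ∂μ, ∫ y, vL y * Γ y x ∂μ = specRad μ Γ * vL x)
    (hvR2 : MemLp vR 2 μ) (hvR0 : ¬(vR =ᵐ[μ] 0))
    (hvReig : ∀ᵐ x ∂μ, ∫ y, Γ x y * vR y ∂μ = specRad μ Γ * vR x) :
    ∀ i : ZMod D,
      StrongComponent μ (dpow μ Γ D) (P i) ∧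
      Aperiodic (subMeasure μ (P i)) (subKernel (dpow μ Γ D) (P i)) ∧
      specRad (subMeasure μ (P i)) (subKernel (dpow μ Γ D) (P i))
        = specRad μ Γ ^ D / (μ (P i)).toReal ∧
      (¬((fun a : ↥(P i) => vL ↑a) =ᵐ[subMeasure μ (P i)] 0) ∧
        MemLp (fun a : ↥(P i) => vL ↑a) 2 (subMeasure μ (P i)) ∧
        ∀ᵐ a ∂(subMeasure μ (P i)),
          ∫ b, vL ↑b * subKernel (dpow μ Γ D) (P i) b a ∂(subMeasure μ (P i))
            = (specRad μ Γ ^ D / (μ (P i)).toReal) * vL ↑a) ∧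
      (¬((fun a : ↥(P i) => vR ↑a) =ᵐ[subMeasure μ (P i)] 0) ∧
        MemLp (fun a : ↥(P i) => vR ↑a) 2 (subMeasure μ (P i)) ∧
        ∀ᵐ a ∂(subMeasure μ (P i)),
          ∫ b, subKernel (dpow μ Γ D) (P i) a b * vR ↑b ∂(subMeasure μ (P i))
            = (specRad μ Γ ^ D / (μ (P i)).toReal) * vR ↑a) := by

  have hB := hΓ.BK
  have hD0 : D ≠ 0 := by
    rintro rfl
    exact periph_ne_zero hB hconn P hP hD
  have hne : NeZero D := ⟨hD0⟩
  have hG := hB.dpow (μ := μ) D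
  have hG0 : ∀ x y, 0 ≤ dpow μ Γ D x y := fun x y => kpowAux_nonneg (fun x y => (hΓ.2 x y).1) _ x y
  have hGv : ∀ i, Van μ (dpow μ Γ D) (P i) (P i) := by
    intro j
    have h := Van.pow hP.van (D - 1) j
    have e : j + ((D - 1 : ℕ) : ZMod D) + 1 = j := by
      have : ((D - 1 : ℕ) : ZMod D) + 1 = ((D - 1 + 1 : ℕ) : ZMod D) := by push_cast; rfl
      rw [add_assoc, this, Nat.sub_add_cancel (Nat.one_le_iff_ne_zero.2 hD0)]
      simp
    rwa [e] at h
  have hGp : ∀ i, EvPos μ (dpow μ Γ D) (P i) := by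
    intro i
    apply evPos_of_reach hB hD0
    have := hPreach i i
    rwa [sub_self] at this
  have hρ : specRad μ Γ ≠ 0 := by
    have hex : ∃ i, μ (P i) ≠ 0 := by
      by_contra hc
      push Not at hc
      have := measure_iUnion_null hc
      rw [hP.2.2.1] at this
      simp at this
    obtain ⟨i, hi⟩ := hex
    obtain ⟨n, τ, hτ, he⟩ := specRad_pos hG hG0 (hP.1 i) hi (hGp i)
    rw [kpowAux_dpow hB hD0, dpow] at he
    have := norm_le_of_pow_eigen hB he
    intro h0
    rw [h0, zero_pow (by omega)] at this
    exact hτ (norm_le_zero_iff.1 this)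
  intro i
  obtain ⟨hpos, hL1, hL2, hL3⟩ := eig_part hB hD0 hP.1 hP.2.1 hP.2.2.1 hP.van hvL2 hvL0 hρ hvLeig i
  have hR := eig_part (P := fun j => P (-j)) hB.transpose hD0 (fun j => hP.1 _)
    (fun a b hab => hP.2.1 (fun h => hab (neg_injective h)))
    (by
      rw [← hP.2.2.1]
      exact (Equiv.neg (ZMod D)).surjective.iUnion_comp P)
    (by
      intro j
      have h : ∀ᵐ p ∂(μ.prod μ), ∀ k, p.1 ∈ P k → p.2 ∉ P (k + 1) → Γ p.1 p.2 = 0 :=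
        ae_all_iff.2 hP.van
      filter_upwards [ae_swap h] with p hp h1 h2
      have : p.2 ∈ ⋃ j, P j := by rw [hP.2.2.1]; trivial
      obtain ⟨k, hk⟩ := Set.mem_iUnion.1 this
      refine hp k hk fun h3 => h2 ?_
      have e : k + 1 = -j := by
        by_contra hkj
        exact Set.disjoint_left.1 (hP.2.1 hkj) h3 h1
      have e2 : -(j + 1) = k := by rw [neg_add, ← e]; ring
      rw [e2]
      exact hk) hvR2 hvR0 hρ
    (by
      filter_upwards [hvReig] with x hx
      rw [← hx]
      exact integral_congr_ae (ae_of_all _ fun y => mul_comm _ _)) (-i)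
  rw [dpow, kpowAux_transpose hB] at hR
  rw [neg_neg] at hR
  obtain ⟨-, hR1, hR2, hR3⟩ := hR
  refine ⟨strongComponent_of hG hG0 (hP.1 i) hpos (hGv i) (hGp i),
    aperiodic_of hG (hP.1 i) hpos (hGv i) (hGp i),
    specRad_sub hB hD0 (hP.1 i) hpos (hGv i) hL1 hL2 hL3, ⟨hL1, hL2, hL3⟩, hR1, hR2, ?_⟩
  filter_upwards [hR3] with a ha
  rw [← ha]
  exact integral_congr_ae (ae_of_all _ fun y => mul_comm _ _)

end Digraphon
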